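/- arXiv:1310.3193 — 6 statements merged into one kernel-verified Lean document; each statement's English description precedes it below -/
import Mathlib

section
/- For every integer n ≥ 1 and every s ∈ (0,1), ∫_{{x ∈ ℝⁿ : |x| > 1}} dx/(|x|^n·(|x|²−1)^s) = π^{1+n/2}/(Γ(n/2)·sin(πs)). Consequently, with c(n,s) = Γ(n/2)·sin(πs)/π^{1+n/2}, one has ∫_{ℝⁿ} η_r^{(s)}(y) dy = 1 for every r > 0. -/
open MeasureTheory Real Set

/-- The normalizing constant `c(n,s) = Γ(n/2)·sin(πs)/π^{1+n/2}`. -/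
noncomputable def cns (n : ℕ) (s : ℝ) : ℝ :=
  Real.Gamma ((n : ℝ) / 2) * Real.sin (Real.pi * s) / Real.pi ^ ((1 : ℝ) + (n : ℝ) / 2)

/-- The kernel `η_r^{(s)}(y) = c(n,s)·r^{2s}/(|y|^n·(|y|²−r²)^s)` for `|y| > r`, `0` otherwise. -/
noncomputable def eta (n : ℕ) (s r : ℝ) (y : EuclideanSpace ℝ (Fin n)) : ℝ :=
  if r < ‖y‖ then cns n s * r ^ (2 * s) / (‖y‖ ^ n * (‖y‖ ^ 2 - r ^ 2) ^ s) else 0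

lemma beta_aux (s : ℝ) (hs : s ∈ Set.Ioo (0 : ℝ) 1) :
    (∫ u in Ioi (0 : ℝ), (Ioo (0 : ℝ) 1).indicator (fun u => u ^ (s - 1) * (1 - u) ^ (-s)) u)
      = π / Real.sin (π * s) := by
  have h0 := hs.1
  have h1 := hs.2
  have hb := Complex.betaIntegral_eq_Gamma_mul_div (s : ℂ) ((1 - s : ℝ) : ℂ)
    (by simpa using h0) (by simpa using h1)
  have e : (s : ℂ) + ((1 - s : ℝ) : ℂ) = 1 := by push_cast; ring
  rw [e, Complex.Gamma_one, div_one, Complex.Gamma_ofReal, Complex.Gamma_ofReal,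
    ← Complex.ofReal_mul, Real.Gamma_mul_Gamma_one_sub] at hb
  apply Complex.ofReal_injective
  rw [← hb, Complex.betaIntegral, intervalIntegral.integral_of_le zero_le_one,
    integral_Ioc_eq_integral_Ioo, setIntegral_indicator measurableSet_Ioo]
  have : Ioi (0 : ℝ) ∩ Ioo 0 1 = Ioo 0 1 := by
    ext x; simp only [mem_inter_iff, mem_Ioi, mem_Ioo]; tauto
  rw [this, ← integral_complex_ofReal]
  refine setIntegral_congr_fun measurableSet_Ioo fun u hu => ?_
  rw [Complex.ofReal_mul, Complex.ofReal_cpow hu.1.le, Complex.ofReal_cpow (by linarith [hu.2])]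
  push_cast
  congr 2
  ring

lemma radial_aux (s : ℝ) (hs : s ∈ Set.Ioo (0 : ℝ) 1) (n : ℕ) (hn : 1 ≤ n) :
    (∫ y in Ioi (0 : ℝ), y ^ (n - 1) •
      (Ioi (1 : ℝ)).indicator (fun t => 1 / (t ^ n * (t ^ 2 - 1) ^ s)) y)
      = π / Real.sin (π * s) / 2 := by
  rw [← beta_aux s hs, ← integral_comp_rpow_Ioi (Set.indicator (Ioo (0 : ℝ) 1) _) (show (-2 : ℝ) ≠ 0 by norm_num),
    ← integral_div]
  refine setIntegral_congr_fun measurableSet_Ioi fun y hy => ?_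
  have hy : 0 < y := hy
  have hr : y ^ (-2 : ℝ) = (y ^ 2)⁻¹ := by
    rw [rpow_neg hy.le]; norm_cast
  have hr3 : y ^ (-2 - 1 : ℝ) = (y ^ 3)⁻¹ := by
    rw [show (-2 - 1 : ℝ) = -((3 : ℕ) : ℝ) by norm_num, rpow_neg hy.le, rpow_natCast]
  simp only [hr, hr3, smul_eq_mul]
  by_cases h : 1 < y
  · have hy2 : 1 < y ^ 2 := by nlinarith
    have hm : (y ^ 2)⁻¹ ∈ Ioo (0 : ℝ) 1 := ⟨by positivity, inv_lt_one_of_one_lt₀ hy2⟩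
    rw [indicator_of_mem (show y ∈ Ioi (1 : ℝ) from h), indicator_of_mem hm]
    have hp : 0 < y ^ 2 - 1 := by linarith
    have e1 : 1 - (y ^ 2)⁻¹ = (y ^ 2 - 1) * (y ^ 2)⁻¹ := by field_simp
    have e2 : ((y ^ 2)⁻¹ : ℝ) ^ (s - 1) = ((y ^ 2)⁻¹) ^ s * y ^ 2 := by
      rw [rpow_sub_one (by positivity)]; field_simp
    have hA : 0 < ((y ^ 2)⁻¹ : ℝ) ^ s := by positivity
    have hB : 0 < (y ^ 2 - 1) ^ s := by positivity
    rw [e1, e2, rpow_neg (by positivity), mul_rpow hp.le (by positivity)]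
    obtain ⟨m, rfl⟩ : ∃ m, n = m + 1 := ⟨n - 1, by omega⟩
    rw [Nat.add_sub_cancel]
    generalize ((y ^ 2)⁻¹ : ℝ) ^ s = A at *
    generalize (y ^ 2 - 1) ^ s = B at *
    rw [abs_neg, abs_two, pow_succ y m]
    field_simp
  · have hy2 : y ^ 2 ≤ 1 := by nlinarith
    rw [indicator_of_notMem (by simpa using h), indicator_of_notMem]
    · simp
    · rintro ⟨_, h2⟩
      exact absurd h2 (not_lt.2 ((one_le_inv₀ (by positivity)).2 hy2))

lemma first_aux (n : ℕ) (hn : 1 ≤ n) (s : ℝ) (hs : s ∈ Set.Ioo (0 : ℝ) 1) :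
    (∫ x in {x : EuclideanSpace ℝ (Fin n) | 1 < ‖x‖},
        1 / (‖x‖ ^ n * (‖x‖ ^ 2 - 1) ^ s)) =
      Real.pi ^ ((1 : ℝ) + (n : ℝ) / 2) / (Real.Gamma ((n : ℝ) / 2) * Real.sin (Real.pi * s)) := by
  have : Nonempty (Fin n) := ⟨⟨0, hn⟩⟩
  rw [← integral_indicator (measurableSet_lt measurable_const measurable_norm)]
  have h := integral_fun_norm_addHaar (volume : Measure (EuclideanSpace ℝ (Fin n)))
    ((Ioi (1 : ℝ)).indicator (fun t => 1 / (t ^ n * (t ^ 2 - 1) ^ s)))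
  rw [finrank_euclideanSpace, Fintype.card_fin, radial_aux s hs n hn] at h
  refine Eq.trans ?_ (h.trans ?_)
  · rfl
  have hn0 : (0 : ℝ) < n := by exact_mod_cast hn
  have hG : 0 < Real.Gamma ((n : ℝ) / 2) := Real.Gamma_pos_of_pos (by positivity)
  rw [Measure.real, EuclideanSpace.volume_ball, Fintype.card_fin,
    Real.Gamma_add_one (by positivity)]
  have hsq : √π ^ n = π ^ ((n : ℝ) / 2) := by
    rw [sqrt_eq_rpow, ← rpow_natCast, ← rpow_mul pi_pos.le]; congr 1; ring
  rw [ENNReal.ofReal_one, one_pow, one_mul, ENNReal.toReal_ofReal (by positivity), hsq,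
    rpow_add pi_pos, rpow_one, nsmul_eq_mul, smul_eq_mul]
  field_simp

/-- For `n ≥ 1` and `s ∈ (0,1)`,
`∫_{|x|>1} dx/(|x|^n (|x|²−1)^s) = π^{1+n/2}/(Γ(n/2) sin(πs))`; consequently
`∫_{ℝⁿ} η_r^{(s)} = 1` for every `r > 0`. -/
theorem integral_eta_kernel (n : ℕ) (hn : 1 ≤ n) (s : ℝ) (hs : s ∈ Set.Ioo (0 : ℝ) 1) :
    (∫ x in {x : EuclideanSpace ℝ (Fin n) | 1 < ‖x‖},
        1 / (‖x‖ ^ n * (‖x‖ ^ 2 - 1) ^ s)) =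
      Real.pi ^ ((1 : ℝ) + (n : ℝ) / 2) / (Real.Gamma ((n : ℝ) / 2) * Real.sin (Real.pi * s)) ∧
    ∀ r : ℝ, 0 < r → (∫ y : EuclideanSpace ℝ (Fin n), eta n s r y) = 1 := by
  have h1 := first_aux n hn s hs
  refine ⟨h1, fun r hr => ?_⟩
  have hn0 : (0 : ℝ) < n := by exact_mod_cast hn
  have hG : 0 < Real.Gamma ((n : ℝ) / 2) := Real.Gamma_pos_of_pos (by positivity)
  have hS : 0 < Real.sin (π * s) :=
    sin_pos_of_pos_of_lt_pi (mul_pos pi_pos hs.1) (by nlinarith [pi_pos, hs.2])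
  have hsm := Measure.integral_comp_smul (volume : Measure (EuclideanSpace ℝ (Fin n)))
    (eta n s r) r
  rw [finrank_euclideanSpace, Fintype.card_fin, abs_of_pos (by positivity), smul_eq_mul] at hsm
  have key : ∀ x : EuclideanSpace ℝ (Fin n), eta n s r (r • x) = (r ^ n)⁻¹ * cns n s *
      {x : EuclideanSpace ℝ (Fin n) | 1 < ‖x‖}.indicator
        (fun x => 1 / (‖x‖ ^ n * (‖x‖ ^ 2 - 1) ^ s)) x := by
    intro x
    rw [eta, norm_smul, Real.norm_of_nonneg hr.le]
    by_cases h : 1 < ‖x‖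
    · have hp : 0 < ‖x‖ ^ 2 - 1 := by nlinarith
      rw [indicator_of_mem (show x ∈ {x : EuclideanSpace ℝ (Fin n) | 1 < ‖x‖} from h),
        if_pos (by nlinarith),
        show (r * ‖x‖) ^ 2 - r ^ 2 = r ^ 2 * (‖x‖ ^ 2 - 1) by ring,
        mul_rpow (by positivity) hp.le]
      have : (r ^ 2) ^ s = r ^ (2 * s) := by
        rw [rpow_mul hr.le]; norm_cast
      rw [this, mul_pow]
      have hA : 0 < r ^ (2 * s) := by positivity
      have hB : 0 < (‖x‖ ^ 2 - 1) ^ s := by positivity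
      have hx : 0 < ‖x‖ := by linarith
      field_simp
    · rw [indicator_of_notMem (by simpa using h), if_neg (by nlinarith), mul_zero]
  simp_rw [key] at hsm
  rw [integral_const_mul, integral_indicator (measurableSet_lt measurable_const measurable_norm),
    h1, cns] at hsm
  have hr' : (r ^ n)⁻¹ ≠ 0 := by positivity
  apply mul_left_cancel₀ hr'
  rw [← hsm]
  have : 0 < π ^ ((1 : ℝ) + (n : ℝ) / 2) := by positivity
  field_simp
end

section
/- Let n ≥ 1, s ∈ (0,1) and 0 < σ < 1−s. Define u_σ : ℝⁿ → ℝ by u_σ(x) = c(n,s)·(1−|x|²)^{−σ} for |x| < 1, u_σ(x) = c(n,s+σ)·(|x|²−1)^{−σ} for |x| > 1, and u_σ(x) = 0 for |x| = 1. Then u_σ satisfies the s-mean value property on the open unit ball B: for every x ∈ B and every 0 < r < 1−|x|, u_σ(x) = ∫_{ℝⁿ∖B_r(x)} η_r^{(s)}(y−x)·u_σ(y) dy, with the integral absolutely convergent. -/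
open MeasureTheory Real Set

/-- The explicit family of `s`-harmonic functions on the unit ball:
`u_σ(x) = c(n,s)·(1−|x|²)^{−σ}` for `|x| < 1`, `c(n,s+σ)·(|x|²−1)^{−σ}` for `|x| > 1`,
`0` for `|x| = 1`. -/
noncomputable def uSigma (n : ℕ) (s σ : ℝ) (x : EuclideanSpace ℝ (Fin n)) : ℝ :=
  if ‖x‖ < 1 then cns n s * (1 - ‖x‖ ^ 2) ^ (-σ)
  else if 1 < ‖x‖ then cns n (s + σ) * (‖x‖ ^ 2 - 1) ^ (-σ)
  else 0


noncomputable def QQ (c : ℝ) (z : ℂ) : ℂ := 1 - 2 * c * z + z ^ 2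

noncomputable def RR (z : ℂ) : ℂ := 1 - z ^ 2

lemma QQ_mem_slit {c : ℝ} (hc : |c| < 1) {z : ℂ} (hz : ‖z‖ < 1) : QQ c z ∈ Complex.slitPlane := by
  have h1 : z.re ^ 2 + z.im ^ 2 < 1 := by
    have := Complex.sq_norm z
    rw [Complex.normSq_apply] at this
    nlinarith [norm_nonneg z]
  have hre : (QQ c z).re = 1 - 2 * c * z.re + (z.re ^ 2 - z.im ^ 2) := by
    simp [QQ, pow_two]
  have him : (QQ c z).im = 2 * z.im * (z.re - c) := by
    simp [QQ, pow_two]; ring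
  have hc2 : c ^ 2 < 1 := by
    rw [← sq_abs]; nlinarith [abs_nonneg c]
  rw [Complex.mem_slitPlane_iff]
  by_cases h : (QQ c z).im = 0
  · left
    rw [him] at h
    rw [hre]
    rcases mul_eq_zero.1 h with h | h
    · have h : z.im = 0 := by linarith
      rw [h]
      nlinarith [sq_nonneg (z.re - c)]
    · have : z.re = c := by linarith
      rw [this] at h1 ⊢
      nlinarith
  · right; exact h

lemma RR_mem_slit {z : ℂ} (hz : ‖z‖ < 1) : RR z ∈ Complex.slitPlane := by
  have h1 : z.re ^ 2 + z.im ^ 2 < 1 := by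
    have := Complex.sq_norm z
    rw [Complex.normSq_apply] at this
    nlinarith [norm_nonneg z]
  rw [Complex.mem_slitPlane_iff]
  left
  simp [RR, pow_two]
  nlinarith

lemma norm_fac {v : ℂ} (hv : ‖v‖ = 1) {t : ℝ} (ht0 : 0 ≤ t) (ht1 : t ≤ 1) :
    ‖1 - v‖ ≤ 2 * ‖1 - t * v‖ := by
  have h1 : 1 - v = (1 - t * v) - ((1 - t : ℝ) : ℂ) * v := by push_cast; ring
  have h2 : ‖((1 - t : ℝ) : ℂ) * v‖ = 1 - t := by
    rw [norm_mul, hv, Complex.norm_real, Real.norm_eq_abs, abs_of_nonneg (by linarith), mul_one]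
  have h3 : 1 - t ≤ ‖1 - t * v‖ := by
    have := norm_sub_norm_le (1 : ℂ) (t * v)
    rw [norm_mul, hv, Complex.norm_real, Real.norm_eq_abs, abs_of_nonneg ht0, norm_one] at this
    linarith
  calc ‖1 - v‖ ≤ ‖1 - t * v‖ + ‖((1 - t : ℝ) : ℂ) * v‖ := by rw [h1]; exact norm_sub_le _ _
    _ ≤ _ := by rw [h2]; linarith

lemma norm_fac2 {v w : ℂ} (hv : ‖v‖ = 1) (hw : ‖w‖ = 1) {t : ℝ} (ht0 : 0 ≤ t) (ht1 : t ≤ 1) :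
    ‖(1 - v) * (1 - w)‖ ≤ 4 * ‖(1 - t * v) * (1 - t * w)‖ := by
  rw [norm_mul, norm_mul]
  nlinarith [norm_fac hv ht0 ht1, norm_fac hw ht0 ht1, norm_nonneg (1 - v), norm_nonneg (1 - w),
    norm_nonneg (1 - t * v), norm_nonneg (1 - t * w)]

lemma QQ_lower {c : ℝ} (hc : |c| < 1) {z : ℂ} (hz : ‖z‖ = 1) {t : ℝ} (ht0 : 0 ≤ t) (ht1 : t ≤ 1) :
    ‖QQ c z‖ ≤ 4 * ‖QQ c (t * z)‖ := by
  have hc2 : c ^ 2 < 1 := by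
    rw [← sq_abs]; nlinarith [abs_nonneg c]
  set d := √(1 - c ^ 2)
  have hd : d ^ 2 = 1 - c ^ 2 := Real.sq_sqrt (by linarith)
  have hdC : (d : ℂ) ^ 2 = 1 - c ^ 2 := by exact_mod_cast hd
  set w : ℂ := c + d * Complex.I
  set w' : ℂ := c - d * Complex.I
  have hw : ‖w‖ = 1 := by
    rw [← sq_eq_sq₀ (norm_nonneg _) zero_le_one, Complex.sq_norm, Complex.normSq_apply]
    simp [w]; nlinarith
  have hw' : ‖w'‖ = 1 := by
    rw [← sq_eq_sq₀ (norm_nonneg _) zero_le_one, Complex.sq_norm, Complex.normSq_apply]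
    simp [w']; nlinarith
  have key : ∀ u : ℂ, QQ c u = (1 - u * w) * (1 - u * w') := by
    intro u
    simp only [QQ, w, w']
    linear_combination (u ^ 2) * (d ^ 2) * (Complex.I_sq) - u ^ 2 * hdC
  have := norm_fac2 (v := z * w) (w := z * w') (by rw [norm_mul, hz, hw, one_mul])
    (by rw [norm_mul, hz, hw', one_mul]) ht0 ht1
  rw [key, key]
  simpa only [mul_assoc] using this

lemma RR_lower {z : ℂ} (hz : ‖z‖ = 1) {t : ℝ} (ht0 : 0 ≤ t) (ht1 : t ≤ 1) :
    ‖RR z‖ ≤ 4 * ‖RR (t * z)‖ := by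
  have key : ∀ u : ℂ, RR u = (1 - u) * (1 - -u) := by
    intro u; simp only [RR]; ring
  have := norm_fac2 (v := z) (w := -z) hz (by rw [norm_neg, hz]) ht0 ht1
  rw [key, key]
  simpa using this

lemma QQ_upper {c : ℝ} (hc : |c| < 1) {z : ℂ} (hz : ‖z‖ ≤ 1) : ‖QQ c z‖ ≤ 4 := by
  have h1 : ‖2 * (c : ℂ) * z‖ ≤ 2 := by
    rw [norm_mul, norm_mul, Complex.norm_real, Real.norm_eq_abs]
    norm_num
    nlinarith [abs_nonneg c, norm_nonneg z]
  have h2 : ‖z ^ 2‖ ≤ 1 := by rw [norm_pow]; exact pow_le_one₀ (norm_nonneg _) hz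
  calc ‖QQ c z‖ ≤ ‖(1 : ℂ)‖ + ‖2 * (c : ℂ) * z‖ + ‖z ^ 2‖ :=
        (norm_add_le _ _).trans (by gcongr; exact norm_sub_le _ _)
    _ ≤ 4 := by rw [norm_one]; linarith

lemma RR_upper {z : ℂ} (hz : ‖z‖ ≤ 1) : ‖RR z‖ ≤ 4 := by
  have h2 : ‖z ^ 2‖ ≤ 1 := by rw [norm_pow]; exact pow_le_one₀ (norm_nonneg _) hz
  calc ‖RR z‖ ≤ ‖(1 : ℂ)‖ + ‖z ^ 2‖ := norm_sub_le _ _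
    _ ≤ 4 := by rw [norm_one]; linarith

lemma QQ_circle (c θ : ℝ) : QQ c (Complex.exp (θ * Complex.I)) =
    ((2 * (Real.cos θ - c) : ℝ) : ℂ) * Complex.exp (θ * Complex.I) := by
  have h : Complex.exp (θ * Complex.I) = (Real.cos θ : ℂ) + Real.sin θ * Complex.I := by
    rw [Complex.exp_mul_I]; simp
  have h2 : (Real.sin θ : ℂ) ^ 2 + (Real.cos θ : ℂ) ^ 2 = 1 := by
    exact_mod_cast Real.sin_sq_add_cos_sq θ
  rw [h, QQ]
  push_cast
  push_cast at h2
  linear_combination -h2 + (Complex.sin θ) ^ 2 * Complex.I_sq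

lemma RR_circle (θ : ℝ) : RR (Complex.exp (θ * Complex.I)) =
    ((2 * Real.sin θ : ℝ) : ℂ) * Complex.exp ((θ - π / 2 : ℝ) * Complex.I) := by
  have h : Complex.exp (θ * Complex.I) = (Real.cos θ : ℂ) + Real.sin θ * Complex.I := by
    rw [Complex.exp_mul_I]; simp
  have h' : Complex.exp ((θ - π / 2 : ℝ) * Complex.I) =
      (Real.sin θ : ℂ) - Real.cos θ * Complex.I := by
    rw [Complex.exp_mul_I, ← Complex.ofReal_cos, ← Complex.ofReal_sin, Real.cos_sub_pi_div_two,
      Real.sin_sub_pi_div_two]; push_cast; ring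
  have h2 : (Real.sin θ : ℂ) ^ 2 + (Real.cos θ : ℂ) ^ 2 = 1 := by
    exact_mod_cast Real.sin_sq_add_cos_sq θ
  rw [h, h', RR]
  push_cast
  push_cast at h2
  linear_combination -h2 - (Complex.sin θ) ^ 2 * Complex.I_sq

lemma QQ_bd {c : ℝ} (hc : |c| < 1) (θ : ℝ) {t : ℝ} (ht0 : 0 ≤ t) (ht1 : t ≤ 1) :
    |Real.cos θ - c| / 2 ≤ ‖QQ c (t * Complex.exp (θ * Complex.I))‖ := by
  have h := QQ_lower hc (Complex.norm_exp_ofReal_mul_I θ) ht0 ht1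
  rw [QQ_circle, norm_mul, Complex.norm_exp_ofReal_mul_I, Complex.norm_real, Real.norm_eq_abs,
    abs_mul, abs_two] at h
  linarith

lemma RR_bd (θ : ℝ) {t : ℝ} (ht0 : 0 ≤ t) (ht1 : t ≤ 1) :
    |Real.sin θ| / 2 ≤ ‖RR (t * Complex.exp (θ * Complex.I))‖ := by
  have h := RR_lower (Complex.norm_exp_ofReal_mul_I θ) ht0 ht1
  rw [RR_circle, norm_mul, Complex.norm_exp_ofReal_mul_I, Complex.norm_real, Real.norm_eq_abs,
    abs_mul, abs_two] at h
  linarith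

lemma pow_bd {X m e ε : ℝ} (hm0 : 0 < m) (hm : m ≤ 2) (h1 : m / 2 ≤ X) (h2 : X ≤ 4)
    (he : |e| ≤ ε) : X ^ e ≤ (8 / m) ^ ε := by
  have hX : 0 < X := by linarith
  have h8 : 1 ≤ 8 / m := by rw [le_div_iff₀ hm0]; linarith
  rcases le_total 0 e with h | h
  · rw [abs_of_nonneg h] at he
    calc X ^ e ≤ (8 / m) ^ e := by
          apply Real.rpow_le_rpow hX.le _ h
          rw [le_div_iff₀ hm0]; nlinarith
      _ ≤ _ := Real.rpow_le_rpow_of_exponent_le h8 he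
  · rw [abs_of_nonpos h] at he
    calc X ^ e = (X⁻¹) ^ (-e) := by rw [Real.inv_rpow hX.le, Real.rpow_neg hX.le, inv_inv]
      _ ≤ (8 / m) ^ (-e) := by
          apply Real.rpow_le_rpow (by positivity) _ (by linarith)
          rw [inv_eq_one_div, div_le_div_iff₀ hX hm0]; linarith
      _ ≤ _ := Real.rpow_le_rpow_of_exponent_le h8 he

/-- The holomorphic function on the disc. -/
noncomputable def KK (s σ c₁ c₂ : ℝ) (z : ℂ) : ℂ :=
  Complex.exp ((1 - 2 * s : ℝ) * Complex.log (RR z) + (2 * s - 1 + 2 * σ : ℝ) * Complex.log (QQ 0 z)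
    + (-σ : ℝ) * Complex.log (QQ c₁ z) + (-σ : ℝ) * Complex.log (QQ c₂ z))

lemma exp_re_mul_log {z : ℂ} (hz : z ≠ 0) (e : ℝ) :
    Real.exp (((e : ℂ) * Complex.log z).re) = ‖z‖ ^ e := by
  rw [Complex.re_ofReal_mul, Complex.log_re, Real.rpow_def_of_pos (norm_pos_iff.2 hz), mul_comm]

lemma norm_KK {s σ c₁ c₂ : ℝ} {z : ℂ} (h0 : RR z ≠ 0) (h1 : QQ 0 z ≠ 0) (h2 : QQ c₁ z ≠ 0)
    (h3 : QQ c₂ z ≠ 0) : ‖KK s σ c₁ c₂ z‖ = ‖RR z‖ ^ (1 - 2 * s) * ‖QQ 0 z‖ ^ (2 * s - 1 + 2 * σ)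
      * ‖QQ c₁ z‖ ^ (-σ) * ‖QQ c₂ z‖ ^ (-σ) := by
  rw [KK, Complex.norm_exp, Complex.add_re, Complex.add_re, Complex.add_re, Real.exp_add,
    Real.exp_add, Real.exp_add, exp_re_mul_log h0, exp_re_mul_log h1, exp_re_mul_log h2,
    exp_re_mul_log h3]

lemma differentiable_QQ (c : ℝ) : Differentiable ℂ (QQ c) := by
  unfold QQ; fun_prop

lemma differentiable_RR : Differentiable ℂ RR := by
  unfold RR; fun_prop

lemma differentiableAt_KK {s σ c₁ c₂ : ℝ} {z : ℂ} (h0 : RR z ∈ Complex.slitPlane)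
    (h1 : QQ 0 z ∈ Complex.slitPlane) (h2 : QQ c₁ z ∈ Complex.slitPlane)
    (h3 : QQ c₂ z ∈ Complex.slitPlane) : DifferentiableAt ℂ (KK s σ c₁ c₂) z := by
  unfold KK
  have a0 := (differentiable_RR z).clog h0
  have a1 := (differentiable_QQ 0 z).clog h1
  have a2 := (differentiable_QQ c₁ z).clog h2
  have a3 := (differentiable_QQ c₂ z).clog h3
  exact (((a0.const_mul _).add (a1.const_mul _)).add (a2.const_mul _)).add (a3.const_mul _) |>.cexp

lemma QQ_conj (c : ℝ) (z : ℂ) : QQ c ((starRingEnd ℂ) z) = (starRingEnd ℂ) (QQ c z) := by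
  simp only [QQ, map_add, map_sub, map_mul, map_pow, map_one, Complex.conj_ofReal, map_ofNat]

lemma RR_conj (z : ℂ) : RR ((starRingEnd ℂ) z) = (starRingEnd ℂ) (RR z) := by
  simp [RR]

lemma KK_conj {s σ c₁ c₂ : ℝ} (hc₁ : |c₁| < 1) (hc₂ : |c₂| < 1) {z : ℂ} (hz : ‖z‖ < 1) :
    KK s σ c₁ c₂ ((starRingEnd ℂ) z) = (starRingEnd ℂ) (KK s σ c₁ c₂ z) := by
  unfold KK
  rw [← Complex.exp_conj, RR_conj, QQ_conj, QQ_conj, QQ_conj,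
    Complex.log_conj _ (Complex.slitPlane_arg_ne_pi (RR_mem_slit hz)),
    Complex.log_conj _ (Complex.slitPlane_arg_ne_pi (QQ_mem_slit (by simp) hz)),
    Complex.log_conj _ (Complex.slitPlane_arg_ne_pi (QQ_mem_slit hc₁ hz)),
    Complex.log_conj _ (Complex.slitPlane_arg_ne_pi (QQ_mem_slit hc₂ hz))]
  simp only [map_add, map_mul, Complex.conj_ofReal]

lemma KK_zero (s σ c₁ c₂ : ℝ) : KK s σ c₁ c₂ 0 = 1 := by
  simp [KK, RR, QQ]

lemma intervalIntegrable_abs_rpow {ε : ℝ} (hε : ε < 1) (x₀ a b : ℝ) :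
    IntervalIntegrable (fun x : ℝ => |x - x₀| ^ (-ε)) volume a b := by
  have h := (intervalIntegral.intervalIntegrable_cpow' (r := ((-ε : ℝ) : ℂ)) (a := a - x₀)
    (b := b - x₀) (by simpa using hε)).norm
  have h2 : (fun x : ℝ => ‖(x : ℂ) ^ ((-ε : ℝ) : ℂ)‖) = fun x : ℝ => |x| ^ (-ε) := by
    funext x
    rw [Complex.norm_cpow_real, Complex.norm_real, Real.norm_eq_abs]
  rw [h2] at h
  simpa using h.comp_sub_right x₀

lemma locInt_of_simple_zeros {f f' : ℝ → ℝ} (hf : ∀ x, HasDerivAt f (f' x) x)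
    (hz : ∀ x, f x = 0 → f' x ≠ 0) {ε : ℝ} (hε0 : 0 < ε) (hε : ε < 1) :
    LocallyIntegrable (fun x => |f x| ^ (-ε)) := by
  have hcont : Continuous f := continuous_iff_continuousAt.2 fun x => (hf x).continuousAt
  have hmeas : Measurable (fun x => |f x| ^ (-ε)) := by
    have := hcont.measurable
    fun_prop
  intro x₀
  by_cases h0 : f x₀ = 0
  · have hd := (hasDerivAt_iff_isLittleO.1 (hf x₀)).def (c := |f' x₀| / 2)
      (by have := hz x₀ h0; positivity)
    have hpos : 0 < |f' x₀| / 2 := by have := hz x₀ h0; positivity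
    obtain ⟨δ, hδ, hball⟩ := Metric.eventually_nhds_iff_ball.1 hd
    refine ⟨Metric.ball x₀ δ, Metric.ball_mem_nhds _ hδ, ?_⟩
    have hI : IntegrableOn (fun x : ℝ => (|f' x₀| / 2) ^ (-ε) * |x - x₀| ^ (-ε))
        (Metric.ball x₀ δ) := by
      rw [Real.ball_eq_Ioo]
      have := ((intervalIntegrable_abs_rpow hε x₀ (x₀ - δ) (x₀ + δ)).const_mul
        ((|f' x₀| / 2) ^ (-ε))).1
      exact this.mono_set Ioo_subset_Ioc_self
    refine Integrable.mono' hI hmeas.aestronglyMeasurable ?_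
    filter_upwards [ae_restrict_mem measurableSet_ball] with x hx
    have hb := hball x hx
    rw [h0] at hb
    simp only [sub_zero, smul_eq_mul, Real.norm_eq_abs] at hb
    rw [Real.norm_eq_abs, abs_of_nonneg (by positivity)]
    have h3 : |f' x₀| / 2 * |x - x₀| ≤ |f x| := by
      have := abs_sub_abs_le_abs_sub ((x - x₀) * f' x₀) (f x)
      rw [abs_sub_comm, abs_mul] at this
      linarith
    rw [← Real.mul_rpow hpos.le (abs_nonneg _)]
    by_cases hxx : x = x₀
    · subst hxx; simp [h0]
    · have : 0 < |x - x₀| := abs_pos.2 (sub_ne_zero.2 hxx)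
      exact Real.rpow_le_rpow_of_nonpos (by positivity) h3 (by linarith)
  · have hc : ContinuousAt (fun x => |f x| ^ (-ε)) x₀ := by
      apply ContinuousAt.rpow_const
      · exact (hcont.abs).continuousAt
      · left; exact abs_ne_zero.2 h0
    exact Filter.Tendsto.integrableAtFilter
      (hmeas.stronglyMeasurable.stronglyMeasurableAtFilter) (Measure.finiteAt_nhds _ _) hc

/-- product of the boundary factors -/
noncomputable def PP (c₁ c₂ θ : ℝ) : ℝ :=
  Real.sin θ * Real.cos θ * (Real.cos θ - c₁) * (Real.cos θ - c₂)

lemma locInt_PP {c₁ c₂ : ℝ} (h1 : c₁ ∈ Set.Ioo (0 : ℝ) 1) (h2 : c₂ ∈ Set.Ioo (-1 : ℝ) 0)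
    {ε : ℝ} (hε0 : 0 < ε) (hε : ε < 1) :
    LocallyIntegrable (fun θ => |PP c₁ c₂ θ| ^ (-ε)) := by
  have hder : ∀ θ, HasDerivAt (PP c₁ c₂) (((Real.cos θ * Real.cos θ + Real.sin θ * (-Real.sin θ)) *
      (Real.cos θ - c₁) + Real.sin θ * Real.cos θ * (-Real.sin θ)) * (Real.cos θ - c₂)
      + Real.sin θ * Real.cos θ * (Real.cos θ - c₁) * (-Real.sin θ)) θ := by
    intro θ
    exact (((Real.hasDerivAt_sin θ).mul (Real.hasDerivAt_cos θ)).mul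
      ((Real.hasDerivAt_cos θ).sub_const c₁)).mul ((Real.hasDerivAt_cos θ).sub_const c₂)
  refine locInt_of_simple_zeros hder ?_ hε0 hε
  intro θ hθ
  have hsc := Real.sin_sq_add_cos_sq θ
  obtain ⟨a1, a2⟩ := h1
  obtain ⟨b1, b2⟩ := h2
  unfold PP at hθ
  have hsn : ∀ c : ℝ, Real.cos θ = c → -1 < c → c < 1 → Real.sin θ ≠ 0 := by
    intro c hc h h' h0
    rw [h0, hc] at hsc
    nlinarith
  rcases mul_eq_zero.1 hθ with h | h
  · rcases mul_eq_zero.1 h with h | h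
    · rcases mul_eq_zero.1 h with h | h
      · rw [h]
        simp only [zero_mul, add_zero, mul_zero, neg_zero]
        have hc : Real.cos θ ≠ 0 := by intro h'; rw [h, h'] at hsc; norm_num at hsc
        have hc1 : Real.cos θ ≠ c₁ := fun h' => hsn c₁ h' (by linarith) a2 h
        have hc2 : Real.cos θ ≠ c₂ := fun h' => hsn c₂ h' b1 (by linarith) h
        exact mul_ne_zero (mul_ne_zero (mul_ne_zero hc hc) (sub_ne_zero.2 hc1)) (sub_ne_zero.2 hc2)
      · have := hsn 0 h (by norm_num) (by norm_num)
        rw [h]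
        simp only [zero_mul, add_zero, mul_zero, zero_sub, zero_add]
        simp [this, a1.ne', b2.ne]
    · have h : Real.cos θ = c₁ := by linarith
      have := hsn c₁ h (by linarith) a2
      rw [h]
      have : c₁ - c₂ ≠ 0 := by linarith
      simp [*, a1.ne']
  · have h : Real.cos θ = c₂ := by linarith
    have := hsn c₂ h b1 (by linarith)
    rw [h]
    have : c₂ - c₁ ≠ 0 := by linarith
    simp [*, b2.ne]

lemma KK_mean {s σ c₁ c₂ : ℝ} (hc₁ : |c₁| < 1) (hc₂ : |c₂| < 1) {t : ℝ} (ht0 : 0 ≤ t)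
    (ht1 : t < 1) :
    ∫ θ in (0 : ℝ)..π, (KK s σ c₁ c₂ (t * Complex.exp (θ * Complex.I))).re = π := by
  have hnorm : ∀ θ : ℝ, ‖(t : ℂ) * Complex.exp (θ * Complex.I)‖ < 1 := by
    intro θ
    rw [norm_mul, Complex.norm_exp_ofReal_mul_I, Complex.norm_real, Real.norm_eq_abs,
      abs_of_nonneg ht0, mul_one]
    exact ht1
  have hdiff : ∀ z : ℂ, ‖z‖ < 1 → DifferentiableAt ℂ (KK s σ c₁ c₂) z := fun z hz =>
    differentiableAt_KK (RR_mem_slit hz) (QQ_mem_slit (by simp) hz) (QQ_mem_slit hc₁ hz)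
      (QQ_mem_slit hc₂ hz)
  have havg : Real.circleAverage (KK s σ c₁ c₂) 0 t = KK s σ c₁ c₂ 0 := by
    apply circleAverage_of_differentiable_on_off_countable (s := ∅) countable_empty
    · intro z hz
      refine (hdiff z ?_).continuousAt.continuousWithinAt
      rw [mem_closedBall_zero_iff, abs_of_nonneg ht0] at hz
      linarith
    · intro z hz
      apply hdiff
      have := hz.1
      rw [mem_ball_zero_iff, abs_of_nonneg ht0] at this
      linarith
  have hcont : Continuous (fun θ : ℝ => KK s σ c₁ c₂ (t * Complex.exp (θ * Complex.I))) := by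
    rw [continuous_iff_continuousAt]
    intro θ
    exact ContinuousAt.comp (f := fun θ : ℝ => (t : ℂ) * Complex.exp (θ * Complex.I))
      (hdiff _ (hnorm θ)).continuousAt (by fun_prop)
  set g : ℝ → ℝ := fun θ => (KK s σ c₁ c₂ (t * Complex.exp (θ * Complex.I))).re with hg
  have hgc : Continuous g := Complex.continuous_re.comp hcont
  have hsym : ∀ θ, g (2 * π - θ) = g θ := by
    intro θ
    have : (t : ℂ) * Complex.exp ((2 * π - θ : ℝ) * Complex.I) =
        (starRingEnd ℂ) (t * Complex.exp (θ * Complex.I)) := by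
      rw [map_mul, ← Complex.exp_conj, map_mul, Complex.conj_ofReal, Complex.conj_ofReal,
        Complex.conj_I]
      congr 1
      rw [show ((2 * π - θ : ℝ) : ℂ) * Complex.I = θ * -Complex.I + 2 * π * Complex.I by
        push_cast; ring, Complex.exp_add, Complex.exp_two_pi_mul_I, mul_one]
    simp only [hg]
    rw [this, KK_conj hc₁ hc₂ (hnorm θ), Complex.conj_re]
  have hfull : ∫ θ in (0 : ℝ)..(2 * π), g θ = 2 * π := by
    have h1 : (∫ θ in (0 : ℝ)..(2 * π), KK s σ c₁ c₂ (t * Complex.exp (θ * Complex.I))) = 2 * π := by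
      rw [KK_zero, Real.circleAverage_def] at havg
      simp only [circleMap, zero_add] at havg
      rw [Complex.real_smul] at havg
      have hpi : (π : ℂ) ≠ 0 := by exact_mod_cast Real.pi_ne_zero
      push_cast at havg
      field_simp at havg
      exact havg
    have h2 := intervalIntegral.intervalIntegral_re (𝕜 := ℂ) (hcont.intervalIntegrable (μ := volume) 0 (2 * π))
    rw [h1] at h2
    have h3 : RCLike.re (2 * (π : ℂ)) = 2 * π := by simp
    rw [h3] at h2
    exact h2
  rw [← intervalIntegral.integral_add_adjacent_intervals (hgc.intervalIntegrable 0 π)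
    (hgc.intervalIntegrable π (2 * π))] at hfull
  have h4 : ∫ θ in π..(2 * π), g θ = ∫ θ in (0 : ℝ)..π, g θ := by
    have := intervalIntegral.integral_comp_sub_left g (2 * π) (a := 0) (b := π)
    simp only [hsym] at this
    rw [this]
    congr 1 <;> ring
  rw [h4] at hfull
  linarith

noncomputable def BB (s σ c₁ c₂ θ : ℝ) : ℝ :=
  |Real.sin θ| ^ (1 - 2 * s) * |Real.cos θ| ^ (2 * s - 1 + 2 * σ) * |Real.cos θ - c₁| ^ (-σ) *
    |Real.cos θ - c₂| ^ (-σ) *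
    (if c₁ < Real.cos θ ∨ Real.cos θ < c₂ then Real.sin (π * s) else Real.sin (π * (s + σ)))

lemma arg_aux {ρ φ : ℝ} (hρ : 0 < ρ) (hφ : φ ∈ Set.Ioc (-π) π) :
    Complex.arg ((ρ : ℂ) * Complex.exp (φ * Complex.I)) = φ := by
  rw [Complex.exp_mul_I, Complex.arg_mul_cos_add_sin_mul_I hρ hφ]

lemma QQ_arg_pos {c θ : ℝ} (h : c < Real.cos θ) (h0 : 0 < θ) (h1 : θ < π) :
    Complex.arg (QQ c (Complex.exp (θ * Complex.I))) = θ := by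
  rw [QQ_circle, arg_aux (by linarith) ⟨by linarith, h1.le⟩]

lemma QQ_arg_neg {c θ : ℝ} (h : Real.cos θ < c) (h0 : 0 < θ) (h1 : θ < π) :
    Complex.arg (QQ c (Complex.exp (θ * Complex.I))) = θ - π := by
  have : ((2 * (Real.cos θ - c) : ℝ) : ℂ) * Complex.exp (θ * Complex.I) =
      ((2 * (c - Real.cos θ) : ℝ) : ℂ) * Complex.exp ((θ - π : ℝ) * Complex.I) := by
    have e : ((θ - π : ℝ) : ℂ) * Complex.I = θ * Complex.I - π * Complex.I := by push_cast; ring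
    rw [e, Complex.exp_sub, Complex.exp_pi_mul_I]
    push_cast; ring
  rw [QQ_circle, this, arg_aux (by linarith) ⟨by linarith, by linarith⟩]

lemma RR_arg {θ : ℝ} (h0 : 0 < θ) (h1 : θ < π) :
    Complex.arg (RR (Complex.exp (θ * Complex.I))) = θ - π / 2 := by
  rw [RR_circle, arg_aux (by have := Real.sin_pos_of_pos_of_lt_pi h0 h1; linarith)
    ⟨by linarith, by linarith⟩]

lemma QQ_norm_circle (c θ : ℝ) :
    ‖QQ c (Complex.exp (θ * Complex.I))‖ = 2 * |Real.cos θ - c| := by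
  rw [QQ_circle, norm_mul, Complex.norm_exp_ofReal_mul_I, Complex.norm_real, Real.norm_eq_abs,
    abs_mul, abs_two, mul_one]

lemma RR_norm_circle (θ : ℝ) :
    ‖RR (Complex.exp (θ * Complex.I))‖ = 2 * |Real.sin θ| := by
  rw [RR_circle, norm_mul, Complex.norm_exp_ofReal_mul_I, Complex.norm_real, Real.norm_eq_abs,
    abs_mul, abs_two, mul_one]

lemma KK_boundary {s σ c₁ c₂ : ℝ} (h1 : c₁ ∈ Set.Ioo (0 : ℝ) 1) (h2 : c₂ ∈ Set.Ioo (-1 : ℝ) 0)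
    {θ : ℝ} (hθ0 : 0 < θ) (hθ1 : θ < π) (n0 : Real.cos θ ≠ 0) (n1 : Real.cos θ ≠ c₁)
    (n2 : Real.cos θ ≠ c₂) :
    (KK s σ c₁ c₂ (Complex.exp (θ * Complex.I))).re = BB s σ c₁ c₂ θ := by
  set z := Complex.exp (θ * Complex.I) with hz
  have hsin := Real.sin_pos_of_pos_of_lt_pi hθ0 hθ1
  have m0 : 0 < |Real.sin θ| := abs_pos.2 hsin.ne'
  have m1 : 0 < |Real.cos θ| := abs_pos.2 n0
  have m2 : 0 < |Real.cos θ - c₁| := abs_pos.2 (sub_ne_zero.2 n1)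
  have m3 : 0 < |Real.cos θ - c₂| := abs_pos.2 (sub_ne_zero.2 n2)
  have r0 : RR z ≠ 0 := by rw [← norm_pos_iff, RR_norm_circle]; linarith
  have r1 : QQ 0 z ≠ 0 := by rw [← norm_pos_iff, QQ_norm_circle, sub_zero]; linarith
  have r2 : QQ c₁ z ≠ 0 := by rw [← norm_pos_iff, QQ_norm_circle]; linarith
  have r3 : QQ c₂ z ≠ 0 := by rw [← norm_pos_iff, QQ_norm_circle]; linarith
  have hre : (KK s σ c₁ c₂ z).re = ‖KK s σ c₁ c₂ z‖ *
      Real.cos ((1 - 2 * s) * Complex.arg (RR z) + (2 * s - 1 + 2 * σ) * Complex.arg (QQ 0 z)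
        + (-σ) * Complex.arg (QQ c₁ z) + (-σ) * Complex.arg (QQ c₂ z)) := by
    rw [KK, Complex.exp_re, Complex.norm_exp]
    congr 2
    simp only [Complex.add_im, Complex.im_ofReal_mul, Complex.log_im]
  have hnorm : ‖KK s σ c₁ c₂ z‖ = |Real.sin θ| ^ (1 - 2 * s) *
      |Real.cos θ| ^ (2 * s - 1 + 2 * σ) * |Real.cos θ - c₁| ^ (-σ) *
      |Real.cos θ - c₂| ^ (-σ) := by
    rw [norm_KK r0 r1 r2 r3, RR_norm_circle, QQ_norm_circle, QQ_norm_circle, QQ_norm_circle,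
      sub_zero, Real.mul_rpow two_pos.le m0.le, Real.mul_rpow two_pos.le m1.le,
      Real.mul_rpow two_pos.le m2.le, Real.mul_rpow two_pos.le m3.le]
    have h2 : (2 : ℝ) ^ (1 - 2 * s) * 2 ^ (2 * s - 1 + 2 * σ) * 2 ^ (-σ) * 2 ^ (-σ) = 1 := by
      rw [← Real.rpow_add two_pos, ← Real.rpow_add two_pos, ← Real.rpow_add two_pos]
      rw [show 1 - 2 * s + (2 * s - 1 + 2 * σ) + -σ + -σ = 0 by ring, Real.rpow_zero]
    linear_combination (|Real.sin θ| ^ (1 - 2 * s) *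
      |Real.cos θ| ^ (2 * s - 1 + 2 * σ) * |Real.cos θ - c₁| ^ (-σ) *
      |Real.cos θ - c₂| ^ (-σ)) * h2
  rw [hre, hnorm, BB]
  congr 1
  obtain ⟨a1, a2⟩ := h1
  obtain ⟨b1, b2⟩ := h2
  rw [RR_arg hθ0 hθ1]
  rcases lt_or_gt_of_ne n0 with h | h
  · rw [QQ_arg_neg h hθ0 hθ1, QQ_arg_neg (by linarith : Real.cos θ < c₁) hθ0 hθ1]
    rcases lt_or_gt_of_ne n2 with h' | h'
    · rw [QQ_arg_neg h' hθ0 hθ1, if_pos (Or.inr h'), ← Real.cos_pi_div_two_sub]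
      congr 1; ring
    · rw [QQ_arg_pos h' hθ0 hθ1, if_neg (by rintro (h | h) <;> linarith),
        ← Real.cos_pi_div_two_sub]
      congr 1; ring
  · rw [QQ_arg_pos h hθ0 hθ1, QQ_arg_pos (by linarith : c₂ < Real.cos θ) hθ0 hθ1]
    rcases lt_or_gt_of_ne n1 with h' | h'
    · rw [QQ_arg_neg h' hθ0 hθ1, if_neg (by rintro (h | h) <;> linarith),
        ← Real.cos_pi_div_two_sub, ← Real.cos_neg]
      congr 1; ring
    · rw [QQ_arg_pos h' hθ0 hθ1, if_pos (Or.inl h'), ← Real.cos_pi_div_two_sub, ← Real.cos_neg]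
      congr 1; ring

lemma slit_aux {c θ : ℝ} (h : Real.cos θ ≠ c) (h0 : 0 < θ) (h1 : θ < π) :
    QQ c (Complex.exp (θ * Complex.I)) ∈ Complex.slitPlane := by
  rw [Complex.mem_slitPlane_iff]
  right
  rw [QQ_circle, Complex.im_ofReal_mul, Complex.exp_ofReal_mul_I_im]
  exact mul_ne_zero (mul_ne_zero two_ne_zero (sub_ne_zero.2 h))
    (Real.sin_pos_of_pos_of_lt_pi h0 h1).ne'

lemma slit_auxR {θ : ℝ} (h0 : 0 < θ) (h1 : θ < π) :
    RR (Complex.exp (θ * Complex.I)) ∈ Complex.slitPlane := by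
  rw [Complex.mem_slitPlane_iff]
  left
  have := Real.sin_pos_of_pos_of_lt_pi h0 h1
  rw [RR_circle, Complex.re_ofReal_mul, Complex.exp_ofReal_mul_I_re, Real.cos_sub_pi_div_two]
  positivity

lemma prod_bd {s σ c₁ c₂ θ ε x0 x1 x2 x3 : ℝ} (hc₁ : |c₁| < 1) (hc₂ : |c₂| < 1)
    (hp : PP c₁ c₂ θ ≠ 0)
    (e1 : |1 - 2 * s| ≤ ε) (e2 : |2 * s - 1 + 2 * σ| ≤ ε) (e3 : |-σ| ≤ ε)
    (l0 : |Real.sin θ| / 2 ≤ x0) (u0 : x0 ≤ 4) (l1 : |Real.cos θ| / 2 ≤ x1) (u1 : x1 ≤ 4)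
    (l2 : |Real.cos θ - c₁| / 2 ≤ x2) (u2 : x2 ≤ 4) (l3 : |Real.cos θ - c₂| / 2 ≤ x3)
    (u3 : x3 ≤ 4) :
    x0 ^ (1 - 2 * s) * x1 ^ (2 * s - 1 + 2 * σ) * x2 ^ (-σ) * x3 ^ (-σ) ≤
      4096 ^ ε * |PP c₁ c₂ θ| ^ (-ε) := by
  have hp' := hp
  unfold PP at hp'
  have n3 := right_ne_zero_of_mul hp'
  have n2 := right_ne_zero_of_mul (left_ne_zero_of_mul hp')
  have n1 := right_ne_zero_of_mul (left_ne_zero_of_mul (left_ne_zero_of_mul hp'))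
  have n0 := left_ne_zero_of_mul (left_ne_zero_of_mul (left_ne_zero_of_mul hp'))
  have m0 := abs_pos.2 n0
  have m1 := abs_pos.2 n1
  have m2 := abs_pos.2 n2
  have m3 := abs_pos.2 n3
  have k0 := Real.abs_sin_le_one θ
  have k1 := Real.abs_cos_le_one θ
  have k2 : |Real.cos θ - c₁| ≤ 2 := (abs_sub _ _).trans (by linarith)
  have k3 : |Real.cos θ - c₂| ≤ 2 := (abs_sub _ _).trans (by linarith)
  have b0 := pow_bd m0 (by linarith) l0 u0 e1
  have b1 := pow_bd m1 (by linarith) l1 u1 e2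
  have b2 := pow_bd m2 k2 l2 u2 e3
  have b3 := pow_bd m3 k3 l3 u3 e3
  have p0 : 0 ≤ x0 := by linarith
  have p1 : 0 ≤ x1 := by linarith
  have p2 : 0 ≤ x2 := by linarith
  have p3 : 0 ≤ x3 := by linarith
  calc x0 ^ (1 - 2 * s) * x1 ^ (2 * s - 1 + 2 * σ) * x2 ^ (-σ) * x3 ^ (-σ)
      ≤ (8 / |Real.sin θ|) ^ ε * (8 / |Real.cos θ|) ^ ε * (8 / |Real.cos θ - c₁|) ^ ε *
        (8 / |Real.cos θ - c₂|) ^ ε := by gcongr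
    _ = 4096 ^ ε * |PP c₁ c₂ θ| ^ (-ε) := by
      rw [← Real.mul_rpow (by positivity) (by positivity),
        ← Real.mul_rpow (by positivity) (by positivity),
        ← Real.mul_rpow (by positivity) (by positivity), Real.rpow_neg (abs_nonneg _),
        ← Real.inv_rpow (abs_nonneg _), ← Real.mul_rpow (by positivity) (by positivity)]
      congr 1
      rw [PP, abs_mul, abs_mul, abs_mul]
      field_simp
      norm_num

lemma measurable_BB (s σ c₁ c₂ : ℝ) : Measurable (BB s σ c₁ c₂) := by
  unfold BB
  refine Measurable.mul (by fun_prop) (Measurable.ite ?_ (by fun_prop) (by fun_prop))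
  exact (measurableSet_lt measurable_const Real.measurable_cos).union
    (measurableSet_lt Real.measurable_cos measurable_const)

lemma PP_ae {c₁ c₂ : ℝ} (h1 : c₁ ∈ Set.Ioo (0 : ℝ) 1) (h2 : c₂ ∈ Set.Ioo (-1 : ℝ) 0) :
    ∀ᵐ θ : ℝ, θ ∈ Set.uIoc 0 π → (0 < θ ∧ θ < π ∧ PP c₁ c₂ θ ≠ 0) := by
  have hfin : Set.Countable {θ : ℝ | θ ∈ Set.Icc 0 π ∧
      (θ = π ∨ θ = 0 ∨ θ = Real.arccos 0 ∨ θ = Real.arccos c₁ ∨ θ = Real.arccos c₂)} := by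
    apply Set.Countable.mono (s₂ := {π, 0, Real.arccos 0, Real.arccos c₁, Real.arccos c₂})
    · rintro θ ⟨_, h⟩; simpa using h
    · exact (Set.toFinite _).countable
  filter_upwards [hfin.ae_notMem volume] with θ hθ hmem
  rw [uIoc_of_le Real.pi_pos.le] at hmem
  have hI : θ ∈ Set.Icc 0 π := ⟨hmem.1.le, hmem.2⟩
  have hne : ¬ (θ = π ∨ θ = 0 ∨ θ = Real.arccos 0 ∨ θ = Real.arccos c₁ ∨ θ = Real.arccos c₂) :=
    fun h => hθ ⟨hI, h⟩
  push Not at hne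
  obtain ⟨a, b, c, d, e⟩ := hne
  have hlt : θ < π := lt_of_le_of_ne hmem.2 a
  have hac := Real.arccos_cos hI.1 hI.2
  refine ⟨hmem.1, hlt, ?_⟩
  unfold PP
  refine mul_ne_zero (mul_ne_zero (mul_ne_zero ?_ ?_) ?_) ?_
  · exact (Real.sin_pos_of_pos_of_lt_pi hmem.1 hlt).ne'
  · intro h; apply c; rw [← h, hac]
  · intro h; apply d; rw [← sub_eq_zero.1 h, hac]
  · intro h; apply e; rw [← sub_eq_zero.1 h, hac]

lemma BB_integral {s σ c₁ c₂ : ℝ} (hs : s ∈ Set.Ioo (0 : ℝ) 1) (hσ : σ ∈ Set.Ioo (0 : ℝ) (1 - s))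
    (h1 : c₁ ∈ Set.Ioo (0 : ℝ) 1) (h2 : c₂ ∈ Set.Ioo (-1 : ℝ) 0) :
    IntervalIntegrable (BB s σ c₁ c₂) volume 0 π ∧ ∫ θ in (0 : ℝ)..π, BB s σ c₁ c₂ θ = π := by
  obtain ⟨s0, s1⟩ := hs
  obtain ⟨σ0, σ1⟩ := hσ
  obtain ⟨ε, hε0, hε1, e1, e2, e3⟩ : ∃ ε : ℝ, 0 < ε ∧ ε < 1 ∧ |1 - 2 * s| ≤ ε ∧
      |2 * s - 1 + 2 * σ| ≤ ε ∧ |-σ| ≤ ε := by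
    refine ⟨max (|1 - 2 * s|) (max (|2 * s - 1 + 2 * σ|) (|-σ|)), ?_, ?_, le_max_left _ _,
      (le_max_left _ _).trans (le_max_right _ _), (le_max_right _ _).trans (le_max_right _ _)⟩
    · exact lt_max_of_lt_right (lt_max_of_lt_right (abs_pos.2 (by linarith)))
    · refine max_lt ?_ (max_lt ?_ ?_) <;> rw [abs_lt] <;> constructor <;> linarith
  have hc₁ : |c₁| < 1 := by rw [abs_lt]; constructor <;> linarith [h1.1, h1.2]
  have hc₂ : |c₂| < 1 := by rw [abs_lt]; constructor <;> linarith [h2.1, h2.2]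
  have hbd : IntervalIntegrable (fun θ => 4096 ^ ε * |PP c₁ c₂ θ| ^ (-ε)) volume 0 π :=
    (((locInt_PP h1 h2 hε0 hε1).integrableOn_isCompact isCompact_uIcc).intervalIntegrable).const_mul _
  constructor
  · refine hbd.mono_fun' (measurable_BB _ _ _ _).aestronglyMeasurable ?_
    have := PP_ae h1 h2
    rw [Filter.EventuallyLE, ae_restrict_iff' measurableSet_uIoc]
    filter_upwards [this] with θ hθ hmem
    obtain ⟨a, b, hp⟩ := hθ hmem
    rw [BB, norm_mul, Real.norm_eq_abs, Real.norm_eq_abs, abs_of_nonneg (by positivity)]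
    have hS : |if c₁ < Real.cos θ ∨ Real.cos θ < c₂ then Real.sin (π * s)
        else Real.sin (π * (s + σ))| ≤ 1 := by
      split_ifs <;> exact Real.abs_sin_le_one _
    refine (mul_le_of_le_one_right (by positivity) hS).trans ?_
    have k0 := Real.abs_sin_le_one θ
    have k1 := Real.abs_cos_le_one θ
    have k2 : |Real.cos θ - c₁| ≤ 2 := (abs_sub _ _).trans (by linarith)
    have k3 : |Real.cos θ - c₂| ≤ 2 := (abs_sub _ _).trans (by linarith)
    exact prod_bd hc₁ hc₂ hp e1 e2 e3 (half_le_self (abs_nonneg _)) (by linarith)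
      (half_le_self (abs_nonneg _)) (by linarith)
      (half_le_self (abs_nonneg _)) (by linarith) (half_le_self (abs_nonneg _)) (by linarith)
  · have hev : ∀ᶠ t : ℝ in nhdsWithin 1 (Set.Iio 1), 0 < t ∧ t < 1 := by
      filter_upwards [self_mem_nhdsWithin, mem_nhdsWithin_of_mem_nhds (Ioi_mem_nhds zero_lt_one)]
        with t ht ht' using ⟨ht', ht⟩
    have hlim : Filter.Tendsto (fun t : ℝ => ∫ θ in (0 : ℝ)..π,
        (KK s σ c₁ c₂ (t * Complex.exp (θ * Complex.I))).re) (nhdsWithin 1 (Set.Iio 1))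
        (nhds (∫ θ in (0 : ℝ)..π, BB s σ c₁ c₂ θ)) := by
      apply intervalIntegral.tendsto_integral_filter_of_dominated_convergence _ _ _ hbd
      · filter_upwards [PP_ae h1 h2] with θ hθ hmem
        obtain ⟨a, b, hp⟩ := hθ hmem
        unfold PP at hp
        have n3 := sub_ne_zero.1 (right_ne_zero_of_mul hp)
        have n2 := sub_ne_zero.1 (right_ne_zero_of_mul (left_ne_zero_of_mul hp))
        have n1 := right_ne_zero_of_mul (left_ne_zero_of_mul (left_ne_zero_of_mul hp))
        rw [← KK_boundary h1 h2 a b n1 n2 n3]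
        have hc : ContinuousAt (KK s σ c₁ c₂) (((1 : ℝ) : ℂ) * Complex.exp (θ * Complex.I)) := by
          rw [Complex.ofReal_one, one_mul]
          exact (differentiableAt_KK (slit_auxR a b) (slit_aux n1 a b) (slit_aux n2 a b)
            (slit_aux n3 a b)).continuousAt
        have hc2 : ContinuousAt (fun t : ℝ => KK s σ c₁ c₂ (t * Complex.exp (θ * Complex.I))) 1 :=
          ContinuousAt.comp (f := fun t : ℝ => (t : ℂ) * Complex.exp (θ * Complex.I)) hc
            (by fun_prop)
        have hc3 := (Complex.continuous_re.continuousAt.comp hc2).tendsto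
        simp only [Function.comp, Complex.ofReal_one, one_mul] at hc3
        exact hc3.mono_left nhdsWithin_le_nhds
      · filter_upwards [hev] with t ht
        apply Measurable.aestronglyMeasurable
        apply Complex.measurable_re.comp
        unfold KK RR QQ
        fun_prop
      · filter_upwards [hev] with t ht
        filter_upwards [PP_ae h1 h2] with θ hθ hmem
        obtain ⟨a, b, hp⟩ := hθ hmem
        have hz : ‖(t : ℂ) * Complex.exp (θ * Complex.I)‖ < 1 := by
          rw [norm_mul, Complex.norm_exp_ofReal_mul_I, Complex.norm_real, Real.norm_eq_abs,
            abs_of_pos ht.1, mul_one]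
          exact ht.2
        refine (Complex.abs_re_le_norm _).trans ?_
        rw [norm_KK (Complex.slitPlane_ne_zero (RR_mem_slit hz))
          (Complex.slitPlane_ne_zero (QQ_mem_slit (by simp) hz))
          (Complex.slitPlane_ne_zero (QQ_mem_slit hc₁ hz))
          (Complex.slitPlane_ne_zero (QQ_mem_slit hc₂ hz))]
        have q := QQ_bd (c := 0) (by simp) θ ht.1.le ht.2.le
        rw [sub_zero] at q
        exact prod_bd hc₁ hc₂ hp e1 e2 e3 (RR_bd θ ht.1.le ht.2.le) (RR_upper hz.le)
          q (QQ_upper (by simp) hz.le)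
          (QQ_bd hc₁ θ ht.1.le ht.2.le) (QQ_upper hc₁ hz.le)
          (QQ_bd hc₂ θ ht.1.le ht.2.le) (QQ_upper hc₂ hz.le)
    refine tendsto_nhds_unique hlim ?_
    refine tendsto_const_nhds.congr' ?_
    filter_upwards [hev] with t ht
    exact (KK_mean hc₁ hc₂ ht.1.le ht.2).symm

noncomputable def VV (s σ p : ℝ) : ℝ :=
  if 0 < p then Real.sin (π * s) * p ^ (-σ)
  else if p < 0 then Real.sin (π * (s + σ)) * (-p) ^ (-σ) else 0

lemma VV_nonneg {s σ : ℝ} (hs : s ∈ Set.Ioo (0 : ℝ) 1) (hσ : σ ∈ Set.Ioo (0 : ℝ) (1 - s)) (p : ℝ) :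
    0 ≤ VV s σ p := by
  obtain ⟨s0, s1⟩ := hs
  obtain ⟨σ0, σ1⟩ := hσ
  have h1 : 0 ≤ Real.sin (π * s) :=
    Real.sin_nonneg_of_nonneg_of_le_pi (by positivity) (by nlinarith [Real.pi_pos])
  have h2 : 0 ≤ Real.sin (π * (s + σ)) :=
    Real.sin_nonneg_of_nonneg_of_le_pi (by positivity) (by nlinarith [Real.pi_pos])
  unfold VV
  split_ifs
  · positivity
  · have : 0 ≤ -p := by linarith
    positivity
  · exact le_rfl

lemma BB_nonneg {s σ : ℝ} (hs : s ∈ Set.Ioo (0 : ℝ) 1) (hσ : σ ∈ Set.Ioo (0 : ℝ) (1 - s))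
    (c₁ c₂ θ : ℝ) : 0 ≤ BB s σ c₁ c₂ θ := by
  obtain ⟨s0, s1⟩ := hs
  obtain ⟨σ0, σ1⟩ := hσ
  have h1 : 0 ≤ Real.sin (π * s) :=
    Real.sin_nonneg_of_nonneg_of_le_pi (by positivity) (by nlinarith [Real.pi_pos])
  have h2 : 0 ≤ Real.sin (π * (s + σ)) :=
    Real.sin_nonneg_of_nonneg_of_le_pi (by positivity) (by nlinarith [Real.pi_pos])
  unfold BB
  split_ifs <;> positivity

lemma measurable_VV (s σ : ℝ) : Measurable (VV s σ) := by
  unfold VV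
  refine Measurable.ite (measurableSet_lt measurable_const measurable_id) (by fun_prop)
    (Measurable.ite (measurableSet_lt measurable_id measurable_const) (by fun_prop) (by fun_prop))

lemma VV_eq {s σ a b r x : ℝ} (hσ : 0 < σ) (hr : 0 < r) (ha : r < a) (hb : r < b) (hx : x ≠ 0) :
    VV s σ ((a - r / x) * (b + r / x)) = (a * b) ^ (-σ) * |x| ^ (2 * σ) * |x - r / a| ^ (-σ) *
      |x - -(r / b)| ^ (-σ) *
      (if r / a < x ∨ x < -(r / b) then Real.sin (π * s) else Real.sin (π * (s + σ))) := by
  have ha0 : 0 < a := by linarith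
  have hb0 : 0 < b := by linarith
  have hx0 : 0 < |x| := abs_pos.2 hx
  set c₁ := r / a
  set c₂ := -(r / b)
  have hc1 : 0 < c₁ := by positivity
  have hc2 : c₂ < 0 := by have : 0 < r / b := by positivity
                          simp only [c₂]; linarith
  have hp : (a - r / x) * (b + r / x) = (a * b) * (x ^ 2)⁻¹ * ((x - c₁) * (x - c₂)) := by
    simp only [c₁, c₂]; field_simp; ring
  have hk : 0 < (a * b) * (x ^ 2)⁻¹ := by positivity
  have hpow : ∀ q : ℝ, 0 ≤ q → q = |x - c₁| * |x - c₂| →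
      ((a * b) * (x ^ 2)⁻¹ * q) ^ (-σ) =
      (a * b) ^ (-σ) * |x| ^ (2 * σ) * |x - c₁| ^ (-σ) * |x - c₂| ^ (-σ) := by
    intro q hq hq'
    rw [Real.mul_rpow hk.le hq, Real.mul_rpow (by positivity) (by positivity), hq',
      Real.mul_rpow (abs_nonneg _) (abs_nonneg _), Real.inv_rpow (by positivity),
      Real.rpow_neg (sq_nonneg x), inv_inv, ← sq_abs, ← Real.rpow_natCast, ← Real.rpow_mul hx0.le]
    push_cast; ring
  rw [hp]
  rcases lt_trichotomy ((x - c₁) * (x - c₂)) 0 with h | h | h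
  · have hneg : (a * b) * (x ^ 2)⁻¹ * ((x - c₁) * (x - c₂)) < 0 := mul_neg_of_pos_of_neg hk h
    have hS : ¬ (c₁ < x ∨ x < c₂) := by
      rintro (h' | h') <;> nlinarith
    rw [VV, if_neg (by linarith), if_pos hneg, if_neg hS, ← mul_neg,
      hpow _ (by linarith) (by rw [← abs_mul, abs_of_neg h])]
    ring
  · rw [h, mul_zero]
    simp only [VV, lt_irrefl, if_false]
    rcases mul_eq_zero.1 h with h | h <;> rw [h] <;>
      simp [Real.zero_rpow (neg_ne_zero.2 hσ.ne')]
  · have hpos : 0 < (a * b) * (x ^ 2)⁻¹ * ((x - c₁) * (x - c₂)) := mul_pos hk h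
    have hS : (c₁ < x ∨ x < c₂) := by
      by_contra! hh
      nlinarith
    rw [VV, if_pos hpos, if_pos hS, hpow _ h.le (by rw [← abs_mul, abs_of_pos h])]
    ring

lemma BB_eq {s σ a b r θ : ℝ} (hσ : 0 < σ) (hr : 0 < r) (ha : r < a) (hb : r < b)
    (h0 : 0 < θ) (h1 : θ < π) (hx : Real.cos θ ≠ 0) :
    Real.sin θ / |Real.cos θ| * (((r / Real.cos θ) ^ 2 - r ^ 2) ^ (-s) *
      VV s σ ((a - r / Real.cos θ) * (b + r / Real.cos θ))) =
      r ^ (-(2 * s)) * (a * b) ^ (-σ) * BB s σ (r / a) (-(r / b)) θ := by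
  have hsin := Real.sin_pos_of_pos_of_lt_pi h0 h1
  have hx0 : 0 < |Real.cos θ| := abs_pos.2 hx
  have e1 : (r / Real.cos θ) ^ 2 - r ^ 2 = (r * Real.sin θ * |Real.cos θ|⁻¹) ^ 2 := by
    have := Real.sin_sq_add_cos_sq θ
    rw [mul_pow, inv_pow, sq_abs]
    field_simp
    linear_combination -this
  have e2 : ((r / Real.cos θ) ^ 2 - r ^ 2) ^ (-s) =
      r ^ (-(2 * s)) * Real.sin θ ^ (-(2 * s)) * |Real.cos θ| ^ (2 * s) := by
    rw [e1, ← Real.rpow_natCast, ← Real.rpow_mul (by positivity),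
      Real.mul_rpow (by positivity) (by positivity), Real.mul_rpow (by positivity) (by positivity),
      Real.inv_rpow (by positivity), ← Real.rpow_neg (by positivity)]
    push_cast
    ring_nf
  rw [VV_eq hσ hr ha hb hx, e2, BB, abs_of_pos hsin]
  have e3 : Real.sin θ ^ (1 - 2 * s) = Real.sin θ * Real.sin θ ^ (-(2 * s)) := by
    rw [sub_eq_add_neg, Real.rpow_add hsin, Real.rpow_one]
  have e4 : |Real.cos θ| ^ (2 * s - 1 + 2 * σ) =
      |Real.cos θ| ^ (2 * s) * |Real.cos θ|⁻¹ * |Real.cos θ| ^ (2 * σ) := by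
    rw [Real.rpow_add hx0, sub_eq_add_neg, Real.rpow_add hx0, Real.rpow_neg_one]
  rw [e3, e4]
  ring

lemma line_integral {s σ a b r : ℝ} (hs : s ∈ Set.Ioo (0 : ℝ) 1)
    (hσ : σ ∈ Set.Ioo (0 : ℝ) (1 - s)) (hr : 0 < r) (ha : r < a) (hb : r < b) :
    ∫⁻ ρ in Set.Ioi r, ENNReal.ofReal (ρ⁻¹ * (ρ ^ 2 - r ^ 2) ^ (-s) *
      (VV s σ ((a - ρ) * (b + ρ)) + VV s σ ((a + ρ) * (b - ρ)))) =
      ENNReal.ofReal (π * r ^ (-(2 * s)) * (a * b) ^ (-σ)) := by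
  have ha0 : 0 < a := by linarith
  have hb0 : 0 < b := by linarith
  have hpi := Real.pi_pos
  have hcos : ∀ θ ∈ Set.Ioo 0 (π / 2), 0 < Real.cos θ := fun θ hθ =>
    Real.cos_pos_of_mem_Ioo ⟨by linarith [hθ.1], hθ.2⟩
  have himg : (fun θ => r / Real.cos θ) '' Set.Ioo 0 (π / 2) = Set.Ioi r := by
    ext ρ
    constructor
    · rintro ⟨θ, hθ, rfl⟩
      have h1 := hcos θ hθ
      have h2 : Real.cos θ < 1 := by
        rw [← Real.cos_zero]
        exact Real.cos_lt_cos_of_nonneg_of_le_pi le_rfl (by linarith [hθ.2]) hθ.1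
      show r < r / Real.cos θ
      rw [lt_div_iff₀ h1]
      nlinarith
    · intro hρ
      have hρ : r < ρ := hρ
      have hρ0 : 0 < ρ := by linarith
      refine ⟨Real.arccos (r / ρ), ⟨?_, ?_⟩, ?_⟩
      · rw [Real.arccos_pos, div_lt_one hρ0]; exact hρ
      · rw [Real.arccos_lt_pi_div_two]; positivity
      · show r / Real.cos (Real.arccos (r / ρ)) = ρ
        rw [Real.cos_arccos (by have : 0 < r / ρ := by positivity
                                linarith) (by rw [div_le_one hρ0]; exact hρ.le)]
        field_simp
  have hinj : Set.InjOn (fun θ => r / Real.cos θ) (Set.Ioo 0 (π / 2)) := by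
    intro θ hθ φ hφ h
    have h1 := hcos θ hθ
    have h2 := hcos φ hφ
    simp only at h
    have h3 : Real.cos θ = Real.cos φ := by
      field_simp at h
      linarith
    exact Real.injOn_cos ⟨hθ.1.le, by linarith [hθ.2]⟩ ⟨hφ.1.le, by linarith [hφ.2]⟩ h3
  have hder : ∀ θ ∈ Set.Ioo 0 (π / 2), HasDerivWithinAt (fun θ => r / Real.cos θ)
      (r * Real.sin θ / Real.cos θ ^ 2) (Set.Ioo 0 (π / 2)) θ := by
    intro θ hθ
    have h : HasDerivAt (fun θ => r / Real.cos θ) _ θ :=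
      (hasDerivAt_const θ r).div (Real.hasDerivAt_cos θ) (hcos θ hθ).ne'
    exact (h.congr_deriv (by ring)).hasDerivWithinAt
  rw [← himg, lintegral_image_eq_lintegral_abs_deriv_mul measurableSet_Ioo hder hinj]
  set M := r ^ (-(2 * s)) * (a * b) ^ (-σ) with hM
  set B := BB s σ (r / a) (-(r / b)) with hB
  have hM0 : 0 ≤ M := by positivity
  have hstep : ∀ θ ∈ Set.Ioo 0 (π / 2), ENNReal.ofReal |r * Real.sin θ / Real.cos θ ^ 2| *
      ENNReal.ofReal ((r / Real.cos θ)⁻¹ * ((r / Real.cos θ) ^ 2 - r ^ 2) ^ (-s) *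
        (VV s σ ((a - r / Real.cos θ) * (b + r / Real.cos θ)) +
          VV s σ ((a + r / Real.cos θ) * (b - r / Real.cos θ)))) =
      ENNReal.ofReal (M * (B θ + B (π - θ))) := by
    intro θ hθ
    have hc := hcos θ hθ
    have hsin := Real.sin_pos_of_pos_of_lt_pi hθ.1 (by linarith [hθ.2])
    have k1 := BB_eq (s := s) hσ.1 hr ha hb hθ.1 (by linarith [hθ.2]) hc.ne'
    have k2 := BB_eq (s := s) (θ := π - θ) hσ.1 hr ha hb (by linarith [hθ.2]) (by linarith [hθ.1])
      (by rw [Real.cos_pi_sub]; linarith)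
    rw [Real.sin_pi_sub, Real.cos_pi_sub, abs_neg, div_neg, neg_sq, sub_neg_eq_add,
      ← sub_eq_add_neg] at k2
    rw [← ENNReal.ofReal_mul (abs_nonneg _)]
    congr 1
    rw [← hM, ← hB] at k1 k2
    have e : M * (B θ + B (π - θ)) = M * B θ + M * B (π - θ) := by ring
    have hpos : 0 < r * Real.sin θ / Real.cos θ ^ 2 := by positivity
    rw [e, ← k1, ← k2, abs_of_pos hpos, abs_of_pos hc]
    generalize VV s σ ((a - r / Real.cos θ) * (b + r / Real.cos θ)) = v1
    generalize VV s σ ((a + r / Real.cos θ) * (b - r / Real.cos θ)) = v2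
    generalize ((r / Real.cos θ) ^ 2 - r ^ 2) ^ (-s) = v3
    field_simp
  rw [setLIntegral_congr_fun measurableSet_Ioo hstep]
  have hc1 : r / a ∈ Set.Ioo (0 : ℝ) 1 := ⟨by positivity, by rw [div_lt_one ha0]; exact ha⟩
  have hc2 : -(r / b) ∈ Set.Ioo (-1 : ℝ) 0 := by
    have h1 : r / b < 1 := by rw [div_lt_one hb0]; exact hb
    have h2 : 0 < r / b := by positivity
    constructor <;> linarith
  obtain ⟨hI, hval⟩ := BB_integral hs hσ hc1 hc2
  rw [← hB] at hI hval
  have hI1 : IntervalIntegrable B volume 0 (π / 2) :=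
    hI.mono_set (by rw [uIcc_of_le (by linarith), uIcc_of_le (by linarith)]
                    exact Icc_subset_Icc_right (by linarith))
  have hI2 : IntervalIntegrable B volume (π / 2) π :=
    hI.mono_set (by rw [uIcc_of_le (by linarith), uIcc_of_le (by linarith)]
                    exact Icc_subset_Icc_left (by linarith))
  have hI3 : IntervalIntegrable (fun θ => B (π - θ)) volume 0 (π / 2) := by
    have := (hI2.comp_sub_left π).symm
    convert this using 1 <;> ring
  have hsum : ∫ θ in (0 : ℝ)..(π / 2), M * (B θ + B (π - θ)) = M * π := by
    rw [intervalIntegral.integral_const_mul, intervalIntegral.integral_add hI1 hI3,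
      intervalIntegral.integral_comp_sub_left B π,
      show π - π / 2 = π / 2 by ring, sub_zero,
      intervalIntegral.integral_add_adjacent_intervals hI1 hI2, hval]
  have hInt := ((hI1.add hI3).const_mul M).1
  rw [Measure.restrict_congr_set Ioo_ae_eq_Ioc, ← ofReal_integral_eq_lintegral_ofReal hInt
    (ae_of_all _ fun x => mul_nonneg hM0 (add_nonneg (BB_nonneg hs hσ _ _ _)
      (BB_nonneg hs hσ _ _ _))), ← intervalIntegral.integral_of_le (by positivity), hsum]
  congr 1
  rw [hM]; ring

lemma lintegral_polar {n : ℕ} (hn : 1 ≤ n) {f : EuclideanSpace ℝ (Fin n) → ENNReal}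
    (hf : Measurable f) :
    ∫⁻ y, f y = ∫⁻ ω, (∫⁻ ρ in Set.Ioi (0 : ℝ), ENNReal.ofReal (ρ ^ (n - 1)) *
      f (ρ • (ω : EuclideanSpace ℝ (Fin n))))
        ∂(volume : Measure (EuclideanSpace ℝ (Fin n))).toSphere := by
  haveI : Nonempty (Fin n) := ⟨⟨0, hn⟩⟩
  set μ := (volume : Measure (EuclideanSpace ℝ (Fin n)))
  have hfr : Module.finrank ℝ (EuclideanSpace ℝ (Fin n)) = n := by simp
  have hmp := μ.measurePreserving_homeomorphUnitSphereProd
  rw [hfr] at hmp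
  have hg : Measurable (fun p : Metric.sphere (0 : EuclideanSpace ℝ (Fin n)) 1 × Set.Ioi (0 : ℝ) =>
      f ((p.2 : ℝ) • (p.1 : EuclideanSpace ℝ (Fin n)))) := by
    apply hf.comp
    fun_prop
  calc ∫⁻ y, f y = ∫⁻ y : ({(0)}ᶜ : Set (EuclideanSpace ℝ (Fin n))), f y ∂(μ.comap (↑)) := by
        rw [lintegral_subtype_comap (measurableSet_singleton _).compl f, restrict_compl_singleton]
    _ = ∫⁻ p, f ((p.2 : ℝ) • (p.1 : EuclideanSpace ℝ (Fin n)))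
          ∂(μ.toSphere.prod (.volumeIoiPow (n - 1))) := by
        rw [← hmp.lintegral_comp hg]
        refine lintegral_congr fun y => ?_
        congr 1
        have hy : ‖(y : EuclideanSpace ℝ (Fin n))‖ ≠ 0 := norm_ne_zero_iff.2 y.2
        simp [smul_smul, hy]
    _ = _ := by
        rw [lintegral_prod _ hg.aemeasurable]
        refine lintegral_congr fun ω => ?_
        have hg' : Measurable (fun ρ : Set.Ioi (0 : ℝ) =>
            f ((ρ : ℝ) • (ω : EuclideanSpace ℝ (Fin n)))) :=
          hg.comp (measurable_prodMk_left (x := ω))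
        rw [Measure.volumeIoiPow]
        refine (lintegral_withDensity_eq_lintegral_mul _ (by fun_prop) hg').trans ?_
        exact lintegral_subtype_comap measurableSet_Ioi
          (fun ρ => ENNReal.ofReal (ρ ^ (n - 1)) * f (ρ • (ω : EuclideanSpace ℝ (Fin n))))

lemma sphere_total {n : ℕ} (hn : 1 ≤ n) :
    (volume : Measure (EuclideanSpace ℝ (Fin n))).toSphere univ =
      ENNReal.ofReal (2 * π ^ ((n : ℝ) / 2) / Real.Gamma ((n : ℝ) / 2)) := by
  haveI : Nonempty (Fin n) := ⟨⟨0, hn⟩⟩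
  have hn0 : (0 : ℝ) < n := by exact_mod_cast hn
  have hG : 0 < Real.Gamma ((n : ℝ) / 2) := Real.Gamma_pos_of_pos (by positivity)
  rw [Measure.toSphere_apply_univ, EuclideanSpace.volume_ball]
  simp only [finrank_euclideanSpace, Fintype.card_fin, ENNReal.ofReal_one, one_pow, one_mul]
  rw [← ENNReal.ofReal_natCast n, ← ENNReal.ofReal_mul hn0.le]
  congr 1
  rw [Real.Gamma_add_one (by positivity), Real.sqrt_eq_rpow, ← Real.rpow_natCast,
    ← Real.rpow_mul Real.pi_pos.le, show (1 / 2 : ℝ) * n = n / 2 by ring]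
  field_simp

noncomputable def AA (n : ℕ) : ℝ := Real.Gamma ((n : ℝ) / 2) / π ^ ((1 : ℝ) + (n : ℝ) / 2)

lemma AA_pos {n : ℕ} (hn : 1 ≤ n) : 0 < AA n := by
  have hn0 : (0 : ℝ) < n := by exact_mod_cast hn
  have hG : 0 < Real.Gamma ((n : ℝ) / 2) := Real.Gamma_pos_of_pos (by positivity)
  have := Real.pi_pos
  unfold AA
  positivity

lemma cns_pos {n : ℕ} (hn : 1 ≤ n) {s : ℝ} (hs : s ∈ Set.Ioo (0 : ℝ) 1) : 0 < cns n s := by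
  have h := AA_pos hn
  have h1 : 0 < Real.sin (π * s) :=
    Real.sin_pos_of_pos_of_lt_pi (mul_pos Real.pi_pos hs.1) (by nlinarith [Real.pi_pos, hs.2])
  have : cns n s = AA n * Real.sin (π * s) := by unfold cns AA; ring
  rw [this]; positivity

lemma uSigma_eq (n : ℕ) (s σ : ℝ) (y : EuclideanSpace ℝ (Fin n)) :
    uSigma n s σ y = AA n * VV s σ (1 - ‖y‖ ^ 2) := by
  have h0 := norm_nonneg y
  unfold uSigma VV AA cns
  rcases lt_trichotomy ‖y‖ 1 with h | h | h
  · rw [if_pos h, if_pos (by nlinarith)]; ring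
  · simp [h]
  · rw [if_neg (by linarith), if_pos h, if_neg (by nlinarith), if_pos (by nlinarith), neg_sub]; ring

lemma measurable_uSigma (n : ℕ) (s σ : ℝ) : Measurable (uSigma n s σ) := by
  have : uSigma n s σ = fun y => AA n * VV s σ (1 - ‖y‖ ^ 2) := funext (uSigma_eq n s σ)
  rw [this]
  exact ((measurable_VV s σ).comp (by fun_prop)).const_mul _

lemma measurable_eta (n : ℕ) (s r : ℝ) : Measurable (eta n s r) := by
  unfold eta
  exact Measurable.ite (measurableSet_lt measurable_const measurable_norm) (by fun_prop)
    measurable_const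

lemma eta_nonneg {n : ℕ} (hn : 1 ≤ n) {s r : ℝ} (hs : s ∈ Set.Ioo (0 : ℝ) 1) (hr : 0 < r)
    (y : EuclideanSpace ℝ (Fin n)) : 0 ≤ eta n s r y := by
  have := cns_pos hn hs
  unfold eta
  split_ifs with h
  · have : 0 ≤ ‖y‖ ^ 2 - r ^ 2 := by nlinarith
    positivity
  · exact le_rfl

lemma inner_integral {n : ℕ} (hn : 1 ≤ n) {s σ : ℝ}
    (hs : s ∈ Set.Ioo (0 : ℝ) 1) (hσ : σ ∈ Set.Ioo (0 : ℝ) (1 - s))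
    {x : EuclideanSpace ℝ (Fin n)} (hx : ‖x‖ < 1)
    {r : ℝ} (hr : 0 < r) (hr1 : r < 1 - ‖x‖) {ω : EuclideanSpace ℝ (Fin n)} (hω : ‖ω‖ = 1) :
    ∫⁻ ρ in Set.Ioi (0 : ℝ), ENNReal.ofReal (ρ ^ (n - 1)) *
      ENNReal.ofReal (eta n s r (ρ • ω) * (uSigma n s σ (x + ρ • ω) + uSigma n s σ (x - ρ • ω))) =
    ENNReal.ofReal (cns n s * AA n * π * (1 - ‖x‖ ^ 2) ^ (-σ)) := by
  have hc := cns_pos hn hs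
  have hA := AA_pos hn
  have hx0 := norm_nonneg x
  set β := inner ℝ x ω with hβ
  have hβ1 : |β| ≤ ‖x‖ := by simpa [hω] using abs_real_inner_le_norm x ω
  obtain ⟨hβ2, hβ3⟩ := abs_le.1 hβ1
  have hdd : 0 ≤ β ^ 2 + 1 - ‖x‖ ^ 2 := by nlinarith
  set d := √(β ^ 2 + 1 - ‖x‖ ^ 2) with hd
  have hd2 : d ^ 2 = β ^ 2 + 1 - ‖x‖ ^ 2 := Real.sq_sqrt hdd
  have ha : r < -β + d := by
    have : r + β < d := by
      rw [hd]; apply Real.lt_sqrt_of_sq_lt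
      nlinarith
    linarith
  have hb : r < β + d := by
    have : r - β < d := by
      rw [hd]; apply Real.lt_sqrt_of_sq_lt
      nlinarith
    linarith
  have hab : (-β + d) * (β + d) = 1 - ‖x‖ ^ 2 := by linear_combination hd2
  have n1 : ∀ ρ : ℝ, ‖x + ρ • ω‖ ^ 2 = ‖x‖ ^ 2 + 2 * ρ * β + ρ ^ 2 := by
    intro ρ
    rw [norm_add_sq_real, inner_smul_right, norm_smul, hω, mul_one, Real.norm_eq_abs, sq_abs]; ring
  have n2 : ∀ ρ : ℝ, ‖x - ρ • ω‖ ^ 2 = ‖x‖ ^ 2 - 2 * ρ * β + ρ ^ 2 := by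
    intro ρ
    rw [norm_sub_sq_real, inner_smul_right, norm_smul, hω, mul_one, Real.norm_eq_abs, sq_abs]; ring
  set K := cns n s * r ^ (2 * s) * AA n with hK
  have hK0 : 0 ≤ K := by positivity
  have hL := line_integral hs hσ hr ha hb
  have hpt : ∀ ρ ∈ Set.Ioi (0 : ℝ), ENNReal.ofReal (ρ ^ (n - 1)) *
      ENNReal.ofReal (eta n s r (ρ • ω) * (uSigma n s σ (x + ρ • ω) + uSigma n s σ (x - ρ • ω))) =
      (Set.Ioi r).indicator (fun ρ => ENNReal.ofReal K * ENNReal.ofReal (ρ⁻¹ * (ρ ^ 2 - r ^ 2) ^ (-s) *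
      (VV s σ ((-β + d - ρ) * (β + d + ρ)) + VV s σ ((-β + d + ρ) * (β + d - ρ))))) ρ := by
    intro ρ hρ
    have hρ : 0 < ρ := hρ
    have hnorm : ‖ρ • ω‖ = ρ := by rw [norm_smul, hω, mul_one, Real.norm_of_nonneg hρ.le]
    by_cases h : r < ρ
    · rw [Set.indicator_of_mem (by exact h), ← ENNReal.ofReal_mul (by positivity),
        ← ENNReal.ofReal_mul hK0]
      congr 1
      rw [uSigma_eq, uSigma_eq, n1, n2, eta, hnorm, if_pos h,
        show 1 - (‖x‖ ^ 2 + 2 * ρ * β + ρ ^ 2) = (-β + d - ρ) * (β + d + ρ) by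
          linear_combination -hd2,
        show 1 - (‖x‖ ^ 2 - 2 * ρ * β + ρ ^ 2) = (-β + d + ρ) * (β + d - ρ) by
          linear_combination -hd2]
      have hq : 0 < ρ ^ 2 - r ^ 2 := by nlinarith
      obtain ⟨m, rfl⟩ : ∃ m, n = m + 1 := ⟨n - 1, by omega⟩
      rw [Real.rpow_neg hq.le, pow_succ, Nat.add_sub_cancel, hK]
      have hq' : (ρ ^ 2 - r ^ 2) ^ s ≠ 0 := (Real.rpow_pos_of_pos hq s).ne'
      generalize (ρ ^ 2 - r ^ 2) ^ s = q at hq' ⊢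
      field_simp
    · rw [Set.indicator_of_notMem (by exact h), eta, hnorm, if_neg h]
      simp
  rw [setLIntegral_congr_fun measurableSet_Ioi hpt, lintegral_indicator measurableSet_Ioi,
    Measure.restrict_restrict measurableSet_Ioi,
    show Set.Ioi r ∩ Set.Ioi (0 : ℝ) = Set.Ioi r from
      Set.inter_eq_left.2 (Set.Ioi_subset_Ioi hr.le),
    lintegral_const_mul' _ _ ENNReal.ofReal_ne_top, hL, ← ENNReal.ofReal_mul hK0, hab]
  congr 1
  rw [hK, Real.rpow_neg hr.le]
  have : r ^ (2 * s) ≠ 0 := (Real.rpow_pos_of_pos hr _).ne'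
  field_simp

lemma total_lintegral {n : ℕ} (hn : 1 ≤ n) {s σ : ℝ}
    (hs : s ∈ Set.Ioo (0 : ℝ) 1) (hσ : σ ∈ Set.Ioo (0 : ℝ) (1 - s))
    {x : EuclideanSpace ℝ (Fin n)} (hx : ‖x‖ < 1)
    {r : ℝ} (hr : 0 < r) (hr1 : r < 1 - ‖x‖) :
    ∫⁻ y, ENNReal.ofReal (eta n s r (y - x) * uSigma n s σ y) =
      ENNReal.ofReal (uSigma n s σ x) := by
  have hc := cns_pos hn hs
  have hA := AA_pos hn
  have hx0 := norm_nonneg x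
  have hu : ∀ y, 0 ≤ uSigma n s σ y := fun y => by
    rw [uSigma_eq]; exact mul_nonneg hA.le (VV_nonneg hs hσ _)
  have he := eta_nonneg hn hs hr
  have mu := measurable_uSigma n s σ
  have me := measurable_eta n s r
  have hneg : ∀ y, eta n s r (-y) = eta n s r y := fun y => by simp [eta]
  set I := ∫⁻ y, ENNReal.ofReal (eta n s r (y - x) * uSigma n s σ y) with hI
  have h1 : I = ∫⁻ y, ENNReal.ofReal (eta n s r y * uSigma n s σ (x + y)) := by
    rw [hI, ← lintegral_add_right_eq_self _ x]
    refine lintegral_congr fun y => ?_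
    rw [add_sub_cancel_right, add_comm x y]
  have h2 : I = ∫⁻ y, ENNReal.ofReal (eta n s r y * uSigma n s σ (x - y)) := by
    rw [h1, ← (Measure.measurePreserving_neg (volume : Measure (EuclideanSpace ℝ (Fin n)))).lintegral_comp_emb
      (MeasurableEquiv.neg _).measurableEmbedding]
    refine lintegral_congr fun y => ?_
    rw [hneg, sub_eq_add_neg]
  have h3 : 2 * I = ENNReal.ofReal 2 * ENNReal.ofReal (uSigma n s σ x) := by
    calc 2 * I = I + I := two_mul I
      _ = (∫⁻ y, ENNReal.ofReal (eta n s r y * uSigma n s σ (x + y))) +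
          ∫⁻ y, ENNReal.ofReal (eta n s r y * uSigma n s σ (x - y)) := by rw [← h1, ← h2]
      _ = ∫⁻ y, ENNReal.ofReal (eta n s r y * (uSigma n s σ (x + y) + uSigma n s σ (x - y))) := by
        rw [← lintegral_add_left (by fun_prop)]
        refine lintegral_congr fun y => ?_
        rw [mul_add, ENNReal.ofReal_add (mul_nonneg (he _) (hu _)) (mul_nonneg (he _) (hu _))]
      _ = ∫⁻ ω, ENNReal.ofReal (cns n s * AA n * π * (1 - ‖x‖ ^ 2) ^ (-σ))
          ∂(volume : Measure (EuclideanSpace ℝ (Fin n))).toSphere := by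
        rw [lintegral_polar hn (by fun_prop)]
        refine lintegral_congr fun ω => ?_
        exact inner_integral hn hs hσ hx hr hr1 (by simpa using ω.2)
      _ = _ := by
        have hq : 0 < 1 - ‖x‖ ^ 2 := by nlinarith
        have hn0 : (0 : ℝ) < n := by exact_mod_cast hn
        have hG : 0 < Real.Gamma ((n : ℝ) / 2) := Real.Gamma_pos_of_pos (by positivity)
        have hpi := Real.pi_pos
        rw [lintegral_const, sphere_total hn, ← ENNReal.ofReal_mul (by positivity),
          ← ENNReal.ofReal_mul (by positivity)]
        congr 1
        rw [uSigma, if_pos hx, AA, Real.rpow_add hpi, Real.rpow_one]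
        have : π ^ ((n : ℝ) / 2) ≠ 0 := by positivity
        field_simp
  rw [show ENNReal.ofReal 2 = 2 by simp] at h3
  exact (ENNReal.mul_right_inj (by simp) (by simp)).1 h3

/-- `u_σ` satisfies the `s`-mean value property on the open unit ball. -/
theorem uSigma_meanValueProperty (n : ℕ) (hn : 1 ≤ n) (s σ : ℝ)
    (hs : s ∈ Set.Ioo (0 : ℝ) 1) (hσ : σ ∈ Set.Ioo (0 : ℝ) (1 - s))
    (x : EuclideanSpace ℝ (Fin n)) (hx : ‖x‖ < 1)
    (r : ℝ) (hr : 0 < r) (hr1 : r < 1 - ‖x‖) :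
    MeasureTheory.IntegrableOn (fun y => eta n s r (y - x) * uSigma n s σ y)
      (Metric.ball x r)ᶜ ∧
    uSigma n s σ x = ∫ y in (Metric.ball x r)ᶜ, eta n s r (y - x) * uSigma n s σ y := by
  have hA := AA_pos hn
  have hu : ∀ y, 0 ≤ uSigma n s σ y := fun y => by
    rw [uSigma_eq]; exact mul_nonneg hA.le (VV_nonneg hs hσ _)
  have hnn : ∀ y, 0 ≤ eta n s r (y - x) * uSigma n s σ y := fun y =>
    mul_nonneg (eta_nonneg hn hs hr _) (hu y)
  have hm : Measurable (fun y => eta n s r (y - x) * uSigma n s σ y) :=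
    ((measurable_eta n s r).comp (by fun_prop)).mul (measurable_uSigma n s σ)
  have hT := total_lintegral hn hs hσ hx hr hr1
  have hInt : Integrable (fun y => eta n s r (y - x) * uSigma n s σ y) := by
    rw [← lintegral_ofReal_ne_top_iff_integrable hm.aestronglyMeasurable (ae_of_all _ hnn), hT]
    exact ENNReal.ofReal_ne_top
  refine ⟨hInt.integrableOn, ?_⟩
  rw [setIntegral_eq_integral_of_forall_compl_eq_zero, integral_eq_lintegral_of_nonneg_ae
    (ae_of_all _ hnn) hm.aestronglyMeasurable, hT, ENNReal.toReal_ofReal (hu x)]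
  intro y hy
  rw [Set.notMem_compl_iff, Metric.mem_ball, dist_eq_norm] at hy
  rw [eta, if_neg (by linarith), zero_mul]
end

section
/- Maximum principle: let Ω ⊆ ℝⁿ be open and bounded and s ∈ (0,1). Let u : ℝⁿ → ℝ satisfy u ∈ C^{2s+ε}(Ω), u continuous on the closure of Ω, and ∫_{ℝⁿ} |u(y)|/(1+|y|^{n+2s}) dy < ∞. Assume that for every x ∈ Ω the principal value defining (−Δ)^s u(x) exists and (−Δ)^s u(x) ≤ 0, and that u ≤ 0 on ℝⁿ∖Ω. Then u ≤ 0 on Ω. -/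
open MeasureTheory Real Set Filter

/-- The normalizing constant `𝒜(n,s) = s(1−s)·Γ(n/2+s)/(π^{n/2+2s}·Γ(2−s))` of the
fractional Laplacian. -/
noncomputable def ANS (n : ℕ) (s : ℝ) : ℝ :=
  s * (1 - s) * Real.Gamma ((n : ℝ) / 2 + s) /
    (Real.pi ^ ((n : ℝ) / 2 + 2 * s) * Real.Gamma (2 - s))

/-- `FracLapAt n s u x L` says that the principal value defining the fractional Laplacian
`(−Δ)^s u (x)` exists and `(−Δ)^s u (x) = L`. -/
def FracLapAt (n : ℕ) (s : ℝ) (u : EuclideanSpace ℝ (Fin n) → ℝ)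
    (x : EuclideanSpace ℝ (Fin n)) (L : ℝ) : Prop :=
  Filter.Tendsto
    (fun ε : ℝ => ANS n s * ∫ y in {y : EuclideanSpace ℝ (Fin n) | ε < ‖y - x‖},
      (u x - u y) / ‖x - y‖ ^ ((n : ℝ) + 2 * s))
    (nhdsWithin 0 (Set.Ioi 0)) (nhds L)

/-- Hölder regularity of order `β`: `β`-Hölder if `β ≤ 1`, and continuously differentiable
with `(β−1)`-Hölder gradient if `β > 1`. -/
def HolderRegOn (n : ℕ) (β : ℝ) (u : EuclideanSpace ℝ (Fin n) → ℝ)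
    (K : Set (EuclideanSpace ℝ (Fin n))) : Prop :=
  if β ≤ 1 then ∃ C : NNReal, HolderOnWith C β.toNNReal u K
  else ∃ u' : EuclideanSpace ℝ (Fin n) → (EuclideanSpace ℝ (Fin n) →L[ℝ] ℝ),
    (∀ x ∈ K, HasFDerivAt u (u' x) x) ∧ ∃ C : NNReal, HolderOnWith C (β - 1).toNNReal u' K

/-- `u ∈ C^{2s+ε}(Ω)`: for every compact `K ⊆ Ω` there is `α > 0` with `2s+α` not an
integer such that `u` is Hölder regular of order `2s+α` on `K`. -/
def CTwoSPlus (n : ℕ) (s : ℝ) (u : EuclideanSpace ℝ (Fin n) → ℝ)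
    (Ω : Set (EuclideanSpace ℝ (Fin n))) : Prop :=
  ∀ K : Set (EuclideanSpace ℝ (Fin n)), K ⊆ Ω → IsCompact K →
    ∃ α : ℝ, 0 < α ∧ (∀ m : ℤ, (2 * s + α : ℝ) ≠ (m : ℝ)) ∧ HolderRegOn n (2 * s + α) u K

theorem ANS_pos_aux (n : ℕ) (s : ℝ) (hs : s ∈ Set.Ioo (0 : ℝ) 1) : 0 < ANS n s := by
  obtain ⟨h0, h1⟩ := hs
  unfold ANS
  have a : 0 < Real.Gamma ((n : ℝ) / 2 + s) := Real.Gamma_pos_of_pos (by positivity)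
  have b : 0 < Real.Gamma (2 - s) := Real.Gamma_pos_of_pos (by linarith)
  have c : 0 < 1 - s := by linarith
  positivity

theorem kernel_bound_aux {E : Type*} [NormedAddCommGroup E] (p : ℝ) (hp : 0 < p) (x y : E)
    (ε : ℝ) (hε : 0 < ε) (h : ε < ‖y - x‖) :
    1 / ‖x - y‖ ^ p ≤ (1 / ε + 1 + ‖x‖ / ε) ^ p * (1 + ‖y‖) ^ (-p) := by
  rw [norm_sub_rev] at h
  have hd : 0 < ‖x - y‖ := hε.trans h
  have h1 : 1 ≤ ‖x - y‖ / ε := by rw [le_div_iff₀ hε]; linarith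
  have h2 : ‖y‖ ≤ ‖x - y‖ + ‖x‖ := by
    have := norm_sub_norm_le y x
    rw [norm_sub_rev] at this; linarith
  have h3 : ‖x‖ ≤ ‖x‖ * (‖x - y‖ / ε) := le_mul_of_one_le_right (norm_nonneg _) h1
  have h4 : 1 + ‖y‖ ≤ (1 / ε + 1 + ‖x‖ / ε) * ‖x - y‖ := by
    have : (1 / ε + 1 + ‖x‖ / ε) * ‖x - y‖
      = ‖x - y‖ / ε + ‖x - y‖ + ‖x‖ * (‖x - y‖ / ε) := by ring
    linarith
  have h5 : (1 + ‖y‖) ^ p ≤ (1 / ε + 1 + ‖x‖ / ε) ^ p * ‖x - y‖ ^ p := by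
    rw [← Real.mul_rpow (by positivity) hd.le]
    exact Real.rpow_le_rpow (by positivity) h4 hp.le
  rw [Real.rpow_neg (by positivity), ← div_eq_mul_inv,
    div_le_div_iff₀ (by positivity) (by positivity)]
  linarith

theorem weight_bound_aux (p : ℝ) (hp : 0 < p) (a : ℝ) (ha : 0 ≤ a) :
    (1 + a) ^ (-p) ≤ 2 * (1 / (1 + a ^ p)) := by
  have h1 : 1 ≤ (1 + a) ^ p := Real.one_le_rpow (by linarith) hp.le
  have h2 : a ^ p ≤ (1 + a) ^ p := Real.rpow_le_rpow ha (by linarith) hp.le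
  have h3 : 0 ≤ a ^ p := Real.rpow_nonneg ha p
  rw [Real.rpow_neg (by linarith), ← one_div, mul_one_div,
    div_le_div_iff₀ (by linarith) (by linarith)]
  linarith

/-- Maximum principle: if `(−Δ)^s u ≤ 0` in `Ω` and `u ≤ 0` outside `Ω`, then `u ≤ 0`
in `Ω`. -/
theorem fracLap_maximum_principle (n : ℕ) (hn : 1 ≤ n) (s : ℝ)
    (hs : s ∈ Set.Ioo (0 : ℝ) 1)
    (Ω : Set (EuclideanSpace ℝ (Fin n))) (hΩo : IsOpen Ω) (hΩb : Bornology.IsBounded Ω)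
    (u : EuclideanSpace ℝ (Fin n) → ℝ)
    (hureg : CTwoSPlus n s u Ω) (hucont : ContinuousOn u (closure Ω))
    (huint : MeasureTheory.Integrable
      (fun y : EuclideanSpace ℝ (Fin n) => |u y| / (1 + ‖y‖ ^ ((n : ℝ) + 2 * s))))
    (hsub : ∀ x ∈ Ω, ∃ L : ℝ, FracLapAt n s u x L ∧ L ≤ 0)
    (hout : ∀ x ∉ Ω, u x ≤ 0) :
    ∀ x ∈ Ω, u x ≤ 0 := by
  intro x hx
  by_contra hpos
  push Not at hpos
  have : Nonempty (Fin n) := ⟨⟨0, hn⟩⟩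
  obtain ⟨x0, hx0c, hmax⟩ := hΩb.isCompact_closure.exists_isMaxOn ⟨x, subset_closure hx⟩ hucont
  have hM : 0 < u x0 := hpos.trans_le (hmax (subset_closure hx))
  have hx0 : x0 ∈ Ω := by
    by_contra h
    exact absurd (hout x0 h) (not_le.mpr hM)
  have hle : ∀ y, u y ≤ u x0 := by
    intro y
    by_cases hy : y ∈ Ω
    · exact hmax (subset_closure hy)
    · exact (hout y hy).trans hM.le
  obtain ⟨L, hL, hL0⟩ := hsub x0 hx0
  have hp : 0 < (n : ℝ) + 2 * s := by have := hs.1; positivity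
  have hpn : (n : ℝ) < (n : ℝ) + 2 * s := by have := hs.1; linarith
  unfold FracLapAt at hL
  generalize hpdef : (n : ℝ) + 2 * s = p at *
  -- measurability of u
  have hw : Continuous (fun y : EuclideanSpace ℝ (Fin n) => 1 + ‖y‖ ^ p) :=
    continuous_const.add (continuous_norm.rpow_const (fun _ => Or.inr hp.le))
  have habs : AEStronglyMeasurable (fun y => |u y|) volume := by
    have := huint.aestronglyMeasurable.mul hw.aestronglyMeasurable
    refine this.congr (Filter.Eventually.of_forall fun y => ?_)
    have : 0 < 1 + ‖y‖ ^ p := by positivity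
    simp only [Pi.mul_apply]
    field_simp
  have humeas : AEStronglyMeasurable u volume := by
    have h1 : AEStronglyMeasurable u (volume.restrict Ω) :=
      (hucont.mono subset_closure).aestronglyMeasurable hΩo.measurableSet
    have h2 : AEStronglyMeasurable u (volume.restrict Ωᶜ) := by
      refine habs.neg.restrict.congr ?_
      filter_upwards [ae_restrict_mem hΩo.measurableSet.compl] with y hy
      simp [abs_of_nonpos (hout y hy)]
    have := aestronglyMeasurable_union_iff.mpr ⟨h1, h2⟩
    rwa [union_compl_self, Measure.restrict_univ] at this
  set g : EuclideanSpace ℝ (Fin n) → ℝ := fun y => (u x0 - u y) / ‖x0 - y‖ ^ p with hg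
  have hg0 : ∀ y, 0 ≤ g y := fun y => div_nonneg (sub_nonneg.2 (hle y)) (by positivity)
  have hgm : AEStronglyMeasurable g volume := by
    refine (AEMeasurable.div (aemeasurable_const.sub humeas.aemeasurable)
      ?_).aestronglyMeasurable
    have : Continuous (fun y : EuclideanSpace ℝ (Fin n) => ‖x0 - y‖ ^ p) :=
      (continuous_const.sub continuous_id).norm.rpow_const (fun _ => Or.inr hp.le)
    exact this.measurable.aemeasurable
  have hSo : ∀ ε : ℝ, IsOpen {y : EuclideanSpace ℝ (Fin n) | ε < ‖y - x0‖} := fun ε =>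
    isOpen_lt continuous_const (continuous_id.sub continuous_const).norm
  have hint0 : Integrable (fun y : EuclideanSpace ℝ (Fin n) => (1 + ‖y‖) ^ (-p)) := by
    apply integrable_one_add_norm
    simpa using hpn
  have hgi : ∀ ε : ℝ, 0 < ε → IntegrableOn g {y | ε < ‖y - x0‖} := by
    intro ε hε
    have hB : Integrable (fun y : EuclideanSpace ℝ (Fin n) =>
        (1 / ε + 1 + ‖x0‖ / ε) ^ p *
          (u x0 * (1 + ‖y‖) ^ (-p) + 2 * (|u y| / (1 + ‖y‖ ^ p)))) :=
      ((hint0.const_mul _).add (huint.const_mul 2)).const_mul _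
    refine hB.integrableOn.mono' hgm.restrict ?_
    filter_upwards [ae_restrict_mem (hSo ε).measurableSet] with y hy
    rw [Real.norm_of_nonneg (hg0 y)]
    have k1 := kernel_bound_aux p hp x0 y ε hε hy
    have k2 := weight_bound_aux p hp ‖y‖ (norm_nonneg y)
    have k3 : u x0 - u y ≤ u x0 + |u y| := by have := neg_abs_le (u y); linarith
    have k4 : 0 ≤ (1 / ε + 1 + ‖x0‖ / ε) ^ p := by positivity
    calc g y = (u x0 - u y) * (1 / ‖x0 - y‖ ^ p) := by simp only [hg]; ring
      _ ≤ (u x0 + |u y|) * ((1 / ε + 1 + ‖x0‖ / ε) ^ p * (1 + ‖y‖) ^ (-p)) := by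
          gcongr
      _ = (1 / ε + 1 + ‖x0‖ / ε) ^ p *
          (u x0 * (1 + ‖y‖) ^ (-p) + |u y| * (1 + ‖y‖) ^ (-p)) := by ring
      _ ≤ (1 / ε + 1 + ‖x0‖ / ε) ^ p *
          (u x0 * (1 + ‖y‖) ^ (-p) + |u y| * (2 * (1 / (1 + ‖y‖ ^ p)))) := by
          gcongr
      _ = _ := by ring
  obtain ⟨R0, hR0⟩ := hΩb.subset_closedBall x0
  set R := max R0 1 with hR
  have hR1 : 0 < R := lt_of_lt_of_le one_pos (le_max_right _ _)
  have hgR : ∀ y ∈ {y : EuclideanSpace ℝ (Fin n) | R < ‖y - x0‖}, 0 < g y := by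
    intro y hy
    have hy' : R < ‖y - x0‖ := hy
    have hyΩ : y ∉ Ω := by
      intro h
      have := hR0 h
      rw [Metric.mem_closedBall, dist_eq_norm] at this
      exact absurd (this.trans (le_max_left R0 1)) (not_le.mpr hy')
    have h1 := hout y hyΩ
    have h2 : 0 < ‖x0 - y‖ := by rw [norm_sub_rev]; exact hR1.trans hy'
    have h3 : 0 < u x0 - u y := by linarith
    simp only [hg]
    positivity
  have hIR : 0 < ∫ y in {y : EuclideanSpace ℝ (Fin n) | R < ‖y - x0‖}, g y := by
    rw [setIntegral_pos_iff_support_of_nonneg_ae (Filter.Eventually.of_forall hg0) (hgi R hR1)]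
    have : Function.support g ∩ {y : EuclideanSpace ℝ (Fin n) | R < ‖y - x0‖}
        = {y : EuclideanSpace ℝ (Fin n) | R < ‖y - x0‖} :=
      inter_eq_right.2 fun y hy => (hgR y hy).ne'
    rw [this]
    refine (hSo R).measure_pos volume ?_
    obtain ⟨z, hz⟩ := NormedSpace.exists_lt_norm ℝ (EuclideanSpace ℝ (Fin n)) R
    exact ⟨z + x0, by simpa using hz⟩
  have hA := ANS_pos_aux n s hs
  have hlow : ANS n s * ∫ y in {y : EuclideanSpace ℝ (Fin n) | R < ‖y - x0‖}, g y ≤ L := by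
    refine ge_of_tendsto hL ?_
    filter_upwards [Ioo_mem_nhdsGT hR1] with ε hε
    refine mul_le_mul_of_nonneg_left ?_ hA.le
    refine setIntegral_mono_set (hgi ε hε.1) (Filter.Eventually.of_forall hg0) ?_
    exact HasSubset.Subset.eventuallyLE fun y (hy : R < ‖y - x0‖) => hε.2.trans hy
  have := mul_pos hA hIR
  linarith
end

section
/- Liouville theorem for s-harmonic functions: let n ≥ 1 and s ∈ (0,1). If u : ℝⁿ → ℝ is a bounded continuous function satisfying the s-mean value property on all of ℝⁿ (i.e. u(x) = ∫_{ℝⁿ∖B_r(x)} η_r^{(s)}(y−x)·u(y) dy for every x ∈ ℝⁿ and every r > 0), then u is constant. -/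
open MeasureTheory Real Set

open Filter Topology

lemma liouv_radial (n : ℕ) (hn : 1 ≤ n) (s : ℝ) (hs : s ∈ Set.Ioo (0 : ℝ) 1) (c : ℝ) :
    IntegrableOn (fun y : ℝ => y ^ (n - 1) •
      (if 1 < y then c / (y ^ n * (y ^ 2 - 1) ^ s) else 0)) (Ioi 0) := by
  have hmeas : Measurable (fun y : ℝ => y ^ (n - 1) •
      (if 1 < y then c / (y ^ n * (y ^ 2 - 1) ^ s) else 0)) := by
    refine Measurable.smul (f := fun y : ℝ => y ^ (n - 1)) (by fun_prop) (Measurable.ite measurableSet_Ioi ?_ measurable_const)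
    fun_prop
  have hval : ∀ y : ℝ, 1 < y → ‖y ^ (n - 1) •
      (if 1 < y then c / (y ^ n * (y ^ 2 - 1) ^ s) else 0)‖ = |c| * (y⁻¹ * (y ^ 2 - 1) ^ (-s)) := by
    intro y hy
    have h0 : 0 < y := by linarith
    have h1 : 0 < y ^ 2 - 1 := by nlinarith
    have h2 : 0 < (y ^ 2 - 1) ^ s := Real.rpow_pos_of_pos h1 s
    rw [if_pos hy, Real.rpow_neg h1.le, smul_eq_mul, Real.norm_eq_abs, abs_mul, abs_div, abs_mul,
      abs_of_pos h2, abs_of_pos (pow_pos h0 _), abs_of_pos (pow_pos h0 _)]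
    obtain ⟨m, rfl⟩ : ∃ m, n = m + 1 := ⟨n - 1, by omega⟩
    simp only [Nat.add_sub_cancel]
    field_simp
    ring
  have e : Ioi (0 : ℝ) = Ioc 0 1 ∪ (Ioc 1 2 ∪ Ioi 2) := by
    rw [Ioc_union_Ioi_eq_Ioi (by norm_num), Ioc_union_Ioi_eq_Ioi (by norm_num)]
  rw [e]
  refine IntegrableOn.union ?_ (IntegrableOn.union ?_ ?_)
  · refine (integrableOn_zero).congr_fun (fun y hy => ?_) measurableSet_Ioc
    simp [not_lt.2 hy.2]
  · have h1 : IntegrableOn (fun y : ℝ => |c| * (y - 1) ^ (-s)) (Ioc 1 2) := by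
      have := (intervalIntegral.intervalIntegrable_rpow' (a := 0) (b := 1) (r := -s)
        (by linarith [hs.2])).comp_sub_right 1
      norm_num at this
      rw [intervalIntegrable_iff_integrableOn_Ioc_of_le (by norm_num)] at this
      exact this.const_mul _
    refine Integrable.mono' h1 hmeas.aestronglyMeasurable ?_
    filter_upwards [ae_restrict_mem measurableSet_Ioc] with y hy
    rw [hval y hy.1]
    have hy1 : 0 < y - 1 := by linarith [hy.1]
    have a1 : y⁻¹ ≤ 1 := inv_le_one_of_one_le₀ hy.1.le
    have a2 : (y ^ 2 - 1) ^ (-s) ≤ (y - 1) ^ (-s) :=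
      Real.rpow_le_rpow_of_nonpos hy1 (by nlinarith [hy.1]) (by linarith [hs.1])
    have a3 : 0 ≤ (y ^ 2 - 1) ^ (-s) := Real.rpow_nonneg (by nlinarith [hy.1]) _
    gcongr
    nlinarith
  · have h1 : IntegrableOn (fun y : ℝ => |c| * (4 ^ s * y ^ (-1 - 2 * s))) (Ioi 2) :=
      ((integrableOn_Ioi_rpow_of_lt (by linarith [hs.1]) (by norm_num)).const_mul _).const_mul _
    refine Integrable.mono' h1 hmeas.aestronglyMeasurable ?_
    filter_upwards [ae_restrict_mem measurableSet_Ioi] with y hy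
    have hy : 2 < y := hy
    have h0 : 0 < y := by linarith
    rw [hval y (by linarith)]
    have a2 : (y ^ 2 - 1) ^ (-s) ≤ (y ^ 2 / 4) ^ (-s) :=
      Real.rpow_le_rpow_of_nonpos (by positivity) (by nlinarith) (by linarith [hs.1])
    have a3 : (y ^ 2 / 4) ^ (-s) = 4 ^ s * y ^ (- 2 * s) := by
      rw [Real.div_rpow (by positivity) (by norm_num), Real.rpow_neg (by norm_num : (0:ℝ) ≤ 4),
        ← Real.rpow_natCast, ← Real.rpow_mul h0.le, div_inv_eq_mul, mul_comm]
      congr 2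
      push_cast; ring
    have a4 : y ^ (-1 - 2 * s) = y⁻¹ * y ^ (- 2 * s) := by
      rw [← Real.rpow_neg_one y, ← Real.rpow_add h0]; congr 1; ring
    rw [a4, mul_left_comm (4 ^ s : ℝ), ← a3]
    gcongr

lemma liouv_eta_integrable (n : ℕ) (hn : 1 ≤ n) (s : ℝ) (hs : s ∈ Set.Ioo (0 : ℝ) 1) :
    Integrable (eta n s 1) := by
  have : Nonempty (Fin n) := ⟨⟨0, hn⟩⟩
  have h := (integrable_fun_norm_addHaar (volume : Measure (EuclideanSpace ℝ (Fin n)))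
    (f := fun y : ℝ => if 1 < y then (cns n s) / (y ^ n * (y ^ 2 - 1) ^ s) else 0)).2 (by
      simpa using liouv_radial n hn s hs (cns n s))
  refine h.congr (Eventually.of_forall fun y => ?_)
  simp [eta]

lemma liouv_eta_scale (n : ℕ) (s r : ℝ) (hr : 0 < r) (w : EuclideanSpace ℝ (Fin n)) :
    r ^ n * eta n s r (r • w) = eta n s 1 w := by
  unfold eta
  have hnorm : ‖r • w‖ = r * ‖w‖ := by rw [norm_smul, Real.norm_of_nonneg hr.le]
  rw [hnorm]
  by_cases h : 1 < ‖w‖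
  · rw [if_pos h, if_pos (by nlinarith)]
    have h0 : 0 < ‖w‖ := by linarith
    have h1 : 0 < ‖w‖ ^ 2 - 1 := by nlinarith
    have h2 : (r * ‖w‖) ^ 2 - r ^ 2 = r ^ 2 * (‖w‖ ^ 2 - 1) := by ring
    have h3 : (r ^ 2) ^ s = r ^ (2 * s) := by
      rw [← Real.rpow_natCast, ← Real.rpow_mul hr.le]; norm_num
    have h4 : 0 < r ^ (2 * s) := Real.rpow_pos_of_pos hr _
    have h5 := Real.rpow_pos_of_pos h1 s
    rw [h2, Real.mul_rpow (by positivity) h1.le, h3, Real.one_rpow, one_pow, mul_pow]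
    field_simp
  · rw [if_neg h, if_neg (by nlinarith [not_lt.1 h]), mul_zero]

lemma liouv_translate {n : ℕ} (f : EuclideanSpace ℝ (Fin n) → ℝ) (hf : Integrable f) :
    Tendsto (fun a : EuclideanSpace ℝ (Fin n) => ∫ w, ‖f (a + w) - f w‖) (𝓝 0) (𝓝 0) := by
  have hm : MemLp f 1 volume := memLp_one_iff_integrable.2 hf
  have hc : Continuous fun a : EuclideanSpace ℝ (Fin n) =>
      ‖(DomAddAct.mk a +ᵥ hm.toLp f : Lp ℝ 1 volume) - hm.toLp f‖ := by
    have : Continuous fun a : EuclideanSpace ℝ (Fin n) => DomAddAct.mk a :=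
      DomAddAct.continuous_mk
    have : Fact ((1 : ENNReal) ≠ ⊤) := ⟨ENNReal.one_ne_top⟩
    exact ((Continuous.vadd ‹Continuous fun a : EuclideanSpace ℝ (Fin n) => DomAddAct.mk a›
      continuous_const).sub continuous_const).norm
  have h := hc.tendsto 0
  have key : ∀ a : EuclideanSpace ℝ (Fin n),
      ‖(DomAddAct.mk a +ᵥ hm.toLp f : Lp ℝ 1 volume) - hm.toLp f‖ = ∫ w, ‖f (a + w) - f w‖ := by
    intro a
    rw [DomAddAct.mk_vadd_toLp, ← MemLp.toLp_sub, L1.norm_eq_integral_norm]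
    refine integral_congr_ae ?_
    filter_upwards [MemLp.coeFn_toLp ((hm.comp_measurePreserving
      (measurePreserving_vadd a volume)).sub hm)] with w hw
    exact congrArg norm hw
  simp only [key] at h
  simpa using h

lemma liouv_rep (n : ℕ) (s : ℝ) (u : EuclideanSpace ℝ (Fin n) → ℝ)
    (hmv : ∀ x : EuclideanSpace ℝ (Fin n), ∀ r : ℝ, 0 < r →
      u x = ∫ y in (Metric.ball x r)ᶜ, eta n s r (y - x) * u y)
    (x : EuclideanSpace ℝ (Fin n)) (r : ℝ) (hr : 0 < r) :
    u x = ∫ w, eta n s 1 (-(r⁻¹ • x) + w) * u (r • w) := by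
  rw [hmv x r hr, setIntegral_eq_integral_of_forall_compl_eq_zero]
  · have h := Measure.integral_comp_smul (volume : Measure (EuclideanSpace ℝ (Fin n)))
      (fun y => eta n s r (y - x) * u y) r
    have hp : 0 < r ^ n := pow_pos hr n
    rw [finrank_euclideanSpace_fin, abs_of_pos (inv_pos.2 hp), smul_eq_mul,
      eq_inv_mul_iff_mul_eq₀ hp.ne', ← integral_const_mul] at h
    rw [← h]
    congr 1
    ext w
    rw [← mul_assoc, ← liouv_eta_scale n s r hr, smul_add, smul_neg, smul_inv_smul₀ hr.ne',
      neg_add_eq_sub]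
  · intro y hy
    simp only [mem_compl_iff, not_not, mem_ball_iff_norm] at hy
    simp [eta, not_lt.2 hy.le]

theorem liouville_sharmonic (n : ℕ) (hn : 1 ≤ n) (s : ℝ) (hs : s ∈ Set.Ioo (0 : ℝ) 1)
    (u : EuclideanSpace ℝ (Fin n) → ℝ)
    (hbdd : ∃ M : ℝ, ∀ x, |u x| ≤ M) (hcont : Continuous u)
    (hmv : ∀ x : EuclideanSpace ℝ (Fin n), ∀ r : ℝ, 0 < r →
      u x = ∫ y in (Metric.ball x r)ᶜ, eta n s r (y - x) * u y) :
    ∃ a : ℝ, ∀ x, u x = a := by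
  obtain ⟨M, hM⟩ := hbdd
  have hf := liouv_eta_integrable n hn s hs
  have hint : ∀ (a : EuclideanSpace ℝ (Fin n)) (r : ℝ),
      Integrable (fun w => eta n s 1 (a + w) * u (r • w)) := by
    intro a r
    refine (hf.comp_add_left a).mul_bdd (c := M) ?_ ?_
    · exact (hcont.comp (continuous_const_smul r)).aestronglyMeasurable
    · exact Eventually.of_forall fun w => hM _
  refine ⟨u 0, fun x => ?_⟩
  have hbound : ∀ r : ℝ, 0 < r → |u x - u 0| ≤
      M * ∫ w, ‖eta n s 1 (-(r⁻¹ • x) + w) - eta n s 1 w‖ := by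
    intro r hr
    have h1 := liouv_rep n s u hmv x r hr
    have h2 := liouv_rep n s u hmv 0 r hr
    rw [h1, h2, ← integral_sub (hint _ _) (hint _ _), ← integral_const_mul, ← Real.norm_eq_abs]
    refine norm_integral_le_of_norm_le
      (((hf.comp_add_left _).sub hf).norm.const_mul M) (Eventually.of_forall fun w => ?_)
    simp only [smul_zero, neg_zero, zero_add]
    rw [← sub_mul, norm_mul, mul_comm]
    exact mul_le_mul_of_nonneg_right (hM _) (norm_nonneg _)
  have hlim : Tendsto (fun r : ℝ => M * ∫ w, ‖eta n s 1 (-(r⁻¹ • x) + w) - eta n s 1 w‖)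
      atTop (𝓝 (M * 0)) := by
    refine Tendsto.const_mul M ((liouv_translate _ hf).comp ?_)
    have := ((tendsto_inv_atTop_zero (𝕜 := ℝ)).smul_const x).neg
    simpa using this
  have h0 : |u x - u 0| ≤ M * 0 := by
    refine ge_of_tendsto hlim ?_
    filter_upwards [eventually_gt_atTop 0] with r hr using hbound r hr
  rw [mul_zero] at h0
  exact sub_eq_zero.1 (abs_nonpos_iff.1 h0)
end

section
/- Boundary behaviour of the Green potential of a boundary-blowing right-hand side on the unit ball: let n ≥ 2, s ∈ (0,1) and 0 < β < 1+s. For x ∈ B set δ(x) = 1−|x| and define U(x) = ∫_B (min{|x−y|², δ(x)·δ(y)})^s·|x−y|^{−n}·δ(y)^{−β} dy. Then there exist constants 0 < c ≤ C and ε₀ ∈ (0,1) such that for every x ∈ B with δ(x) < ε₀: if 0 < β < s then c·δ(x)^s ≤ U(x) ≤ C·δ(x)^s; if β = s then c·δ(x)^s·log(1/δ(x)) ≤ U(x) ≤ C·δ(x)^s·log(1/δ(x)); and if s < β < 1+s then c·δ(x)^{2s−β} ≤ U(x) ≤ C·δ(x)^{2s−β}. -/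
open MeasureTheory Real Set

/-- The Green-potential comparison integral
`U(x) = ∫_B (min{|x−y|², δ(x)δ(y)})^s · |x−y|^{−n} · δ(y)^{−β} dy` on the unit ball,
where `δ(x) = 1 − |x|`. -/
noncomputable def greenPotential (n : ℕ) (s β : ℝ) (x : EuclideanSpace ℝ (Fin n)) : ℝ :=
  ∫ y in Metric.ball (0 : EuclideanSpace ℝ (Fin n)) 1,
    (min (‖x - y‖ ^ 2) ((1 - ‖x‖) * (1 - ‖y‖))) ^ s / ‖x - y‖ ^ n * (1 - ‖y‖) ^ (-β)

noncomputable def gK (n : ℕ) (s β : ℝ) (x y : EuclideanSpace ℝ (Fin n)) : ℝ :=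
  (min (‖x - y‖ ^ 2) ((1 - ‖x‖) * (1 - ‖y‖))) ^ s / ‖x - y‖ ^ n * (1 - ‖y‖) ^ (-β)

theorem lgeo {n : ℕ} (f : EuclideanSpace ℝ (Fin n) → ENNReal)
    (S : Set (EuclideanSpace ℝ (Fin n))) (A : ℕ → Set (EuclideanSpace ℝ (Fin n)))
    (hS : S ⊆ ⋃ k, A k) (M q : ℝ) (hM : 0 ≤ M) (hq : 0 ≤ q) (hq1 : q < 1)
    (h : ∀ k, ∫⁻ y in A k, f y ≤ ENNReal.ofReal (M * q ^ k)) :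
    ∫⁻ y in S, f y ≤ ENNReal.ofReal (M / (1 - q)) := by
  calc ∫⁻ y in S, f y ≤ ∫⁻ y in ⋃ k, A k, f y := lintegral_mono_set hS
    _ ≤ ∑' k, ∫⁻ y in A k, f y := lintegral_iUnion_le _ _
    _ ≤ ∑' k, ENNReal.ofReal (M * q ^ k) := ENNReal.tsum_le_tsum h
    _ = ENNReal.ofReal (∑' k, M * q ^ k) := by
        rw [ENNReal.ofReal_tsum_of_nonneg]
        · intro k; positivity
        · exact (summable_geometric_of_lt_one hq hq1).mul_left M
    _ = _ := by rw [tsum_mul_left, tsum_geometric_of_lt_one hq hq1]; rfl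

theorem lconst_le {n : ℕ} (f : EuclideanSpace ℝ (Fin n) → ENNReal)
    (A : Set (EuclideanSpace ℝ (Fin n))) (a b : ℝ) (ha : 0 ≤ a)
    (hf : ∀ y ∈ A, f y ≤ ENNReal.ofReal a) (hA : volume A ≤ ENNReal.ofReal b) :
    ∫⁻ y in A, f y ≤ ENNReal.ofReal (a * b) := by
  calc ∫⁻ y in A, f y ≤ ∫⁻ y in A, ENNReal.ofReal a := setLIntegral_mono measurable_const hf
    _ = ENNReal.ofReal a * volume A := by rw [setLIntegral_const]
    _ ≤ ENNReal.ofReal a * ENNReal.ofReal b := by gcongr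
    _ = _ := (ENNReal.ofReal_mul ha).symm

theorem lconst_ge {n : ℕ} (f : EuclideanSpace ℝ (Fin n) → ENNReal)
    (A : Set (EuclideanSpace ℝ (Fin n))) (hm : MeasurableSet A) (a b : ℝ) (ha : 0 ≤ a)
    (hf : ∀ y ∈ A, ENNReal.ofReal a ≤ f y) (hA : ENNReal.ofReal b ≤ volume A) :
    ENNReal.ofReal (a * b) ≤ ∫⁻ y in A, f y := by
  calc _ = ENNReal.ofReal a * ENNReal.ofReal b := ENNReal.ofReal_mul ha
    _ ≤ ENNReal.ofReal a * volume A := by gcongr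
    _ = ∫⁻ y in A, ENNReal.ofReal a := by rw [setLIntegral_const]
    _ ≤ _ := setLIntegral_mono' hm hf

theorem volball (n : ℕ) : ∃ ω : ℝ, 0 < ω ∧ ∀ (x : EuclideanSpace ℝ (Fin n)) (r : ℝ), 0 < r →
    volume (Metric.ball x r) = ENNReal.ofReal (ω * r ^ n) ∧
    volume (Metric.closedBall x r) = ENNReal.ofReal (ω * r ^ n) := by
  refine ⟨(volume (Metric.ball (0 : EuclideanSpace ℝ (Fin n)) 1)).toReal, ?_, ?_⟩
  · exact ENNReal.toReal_pos (Metric.measure_ball_pos _ _ one_pos).ne' measure_ball_lt_top.ne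
  · intro x r hr
    rw [Measure.addHaar_closedBall _ _ hr.le, Measure.addHaar_ball_of_pos _ _ hr,
      ENNReal.ofReal_mul ENNReal.toReal_nonneg, ENNReal.ofReal_toReal measure_ball_lt_top.ne,
      mul_comm, finrank_euclideanSpace_fin]
    simp

theorem near_bound (n : ℕ) (hn : 2 ≤ n) (s β : ℝ) (hs : 0 < s) (hβ : 0 < β) :
    ∃ C : ℝ, 0 < C ∧ ∀ x : EuclideanSpace ℝ (Fin n), 0 < 1 - ‖x‖ →
      ∫⁻ y in Metric.ball x ((1 - ‖x‖) / 2), ENNReal.ofReal (gK n s β x y) ≤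
        ENNReal.ofReal (C * (1 - ‖x‖) ^ (2 * s - β)) := by
  obtain ⟨ω, hω, hvol⟩ := volball n
  have hq1 : ((1:ℝ)/4) ^ s < 1 := rpow_lt_one (by norm_num) (by norm_num) hs
  have hq0 : 0 < ((1:ℝ)/4) ^ s := by positivity
  have h1q : 0 < 1 - ((1:ℝ)/4) ^ s := by linarith
  refine ⟨ω * 2 ^ n * (1/2) ^ (2 * s - β) / (1 - (1/4) ^ s), by positivity, ?_⟩
  intro x hd
  set d := 1 - ‖x‖ with hd'
  set e := d / 2 with he
  have he0 : 0 < e := by positivity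
  have key := lgeo (fun y => ENNReal.ofReal (gK n s β x y)) (Metric.ball x e)
    (fun k => {y | (y = x ∨ e * (1/2) ^ (k+1) < ‖x - y‖) ∧ ‖x - y‖ ≤ e * (1/2) ^ k ∧ ‖x - y‖ < e})
    ?_ (ω * 2 ^ n * ((e ^ 2) ^ s * e ^ (-β))) ((1/4) ^ s) (by positivity) hq0.le hq1 ?_
  · refine key.trans (le_of_eq ?_)
    congr 1
    have : (e ^ 2) ^ s * e ^ (-β) = (1/2) ^ (2 * s - β) * d ^ (2 * s - β) := by
      rw [← rpow_natCast, ← rpow_mul he0.le, ← rpow_add he0, ← mul_rpow (by norm_num) hd.le]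
      push_cast
      congr 1
      rw [he]; ring
    rw [this]; ring
  · intro y hy
    have hy1 : ‖x - y‖ < e := by rwa [mem_ball_iff_norm'] at hy
    by_cases hxy : y = x
    · exact mem_iUnion.2 ⟨0, Or.inl hxy, by simpa using hy1.le, hy1⟩
    · have h0 : 0 < ‖x - y‖ := norm_pos_iff.2 (sub_ne_zero.2 (Ne.symm hxy))
      obtain ⟨k, hk1, hk2⟩ := exists_nat_pow_near_of_lt_one (x := ‖x - y‖ / e) (y := (1/2:ℝ))
        (by positivity) (by rw [div_le_one he0]; exact hy1.le) (by norm_num) (by norm_num)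
      rw [lt_div_iff₀ he0] at hk1
      rw [div_le_iff₀ he0] at hk2
      exact mem_iUnion.2 ⟨k, Or.inr (by linarith), by linarith, hy1⟩
  · intro k
    set ρ := e * (1/2) ^ k with hρ
    have hρ0 : 0 < ρ := by positivity
    have hc := lconst_le (fun y => ENNReal.ofReal (gK n s β x y))
      {y | (y = x ∨ e * (1/2) ^ (k+1) < ‖x - y‖) ∧ ‖x - y‖ ≤ ρ ∧ ‖x - y‖ < e}
      ((ρ ^ 2) ^ s / (ρ / 2) ^ n * e ^ (-β)) (ω * ρ ^ n) (by positivity) ?_ ?_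
    · refine hc.trans (le_of_eq ?_)
      congr 1
      have : (ρ ^ 2) ^ s = (e ^ 2) ^ s * ((1/4) ^ s) ^ k := by
        rw [← rpow_natCast, ← rpow_natCast, ← rpow_natCast, ← rpow_mul (by norm_num : (0:ℝ) ≤ 1/4), mul_comm s,
          rpow_mul (by norm_num : (0:ℝ) ≤ 1/4), ← mul_rpow (by positivity) (by positivity)]
        congr 1
        rw [hρ, rpow_natCast, rpow_natCast, rpow_natCast, mul_pow, ← pow_mul, mul_comm k, pow_mul]; norm_num
      rw [this, div_pow ρ 2 n]
      field_simp
    · rintro y ⟨h1, h2, h3⟩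
      apply ENNReal.ofReal_le_ofReal
      unfold gK
      rcases h1 with rfl | h1
      · have : n ≠ 0 := by omega
        simp [this]; positivity
      · have h1' : ρ / 2 < ‖x - y‖ := by rw [hρ]; rw [pow_succ] at h1; linarith
        have hr0 : 0 < ‖x - y‖ := by linarith
        have hyx : ‖y‖ ≤ ‖x‖ + ‖x - y‖ := by
          have := norm_sub_norm_le y x
          rw [norm_sub_rev] at this; linarith
        have ht : e ≤ 1 - ‖y‖ := by linarith
        have ht0 : 0 < 1 - ‖y‖ := by linarith
        have hm : (min (‖x - y‖ ^ 2) ((1 - ‖x‖) * (1 - ‖y‖))) ^ s ≤ (ρ ^ 2) ^ s := by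
          apply rpow_le_rpow (by positivity) _ hs.le
          exact (min_le_left _ _).trans (by gcongr)
        have hb : (1 - ‖y‖) ^ (-β) ≤ e ^ (-β) :=
          rpow_le_rpow_of_nonpos he0 ht (by linarith)
        gcongr
    · rw [← (hvol x ρ hρ0).2]
      apply measure_mono
      rintro y ⟨h1, h2, h3⟩
      rw [Metric.mem_closedBall, dist_eq_norm, norm_sub_rev]; exact h2

theorem norm_tri {n : ℕ} (x y : EuclideanSpace ℝ (Fin n)) : ‖y‖ ≤ ‖x‖ + ‖x - y‖ := by
  have := norm_sub_norm_le y x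
  rw [norm_sub_rev] at this; linarith

theorem layer_meas {n : ℕ} (x : EuclideanSpace ℝ (Fin n)) (R τ : ℝ) :
    MeasurableSet {y : EuclideanSpace ℝ (Fin n) | ‖y‖ < 1 ∧ 1 - ‖y‖ ≤ τ ∧ ‖x - y‖ ≤ R} := by
  have h1 : MeasurableSet {y : EuclideanSpace ℝ (Fin n) | ‖y‖ < 1} :=
    measurableSet_lt (by fun_prop) (by fun_prop)
  have h2 : MeasurableSet {y : EuclideanSpace ℝ (Fin n) | 1 - ‖y‖ ≤ τ} :=
    measurableSet_le (by fun_prop) (by fun_prop)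
  have h3 : MeasurableSet {y : EuclideanSpace ℝ (Fin n) | ‖x - y‖ ≤ R} :=
    measurableSet_le (by fun_prop) (by fun_prop)
  exact h1.inter (h2.inter h3)

open scoped Pointwise in
theorem layer_small (n : ℕ) :
    ∃ C : ℝ, 0 < C ∧ ∀ x : EuclideanSpace ℝ (Fin n), ∀ R τ : ℝ, 0 < R → R ≤ 4 → 0 < τ →
      volume {y : EuclideanSpace ℝ (Fin n) | ‖y‖ < 1 ∧ 1 - ‖y‖ ≤ τ ∧ ‖x - y‖ ≤ R} ≤
        ENNReal.ofReal (C * (R ^ n * (τ / R))) := by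
  obtain ⟨ω, hω, hvol⟩ := volball n
  refine ⟨16 * 4 ^ n * ω, by positivity, ?_⟩
  intro x R τ hR hR4 hτ
  set S := {y : EuclideanSpace ℝ (Fin n) | ‖y‖ < 1 ∧ 1 - ‖y‖ ≤ τ ∧ ‖x - y‖ ≤ R} with hS
  have hSm : MeasurableSet S := layer_meas x R τ
  have hSle : volume S ≤ ENNReal.ofReal (ω * R ^ n) := by
    rw [← (hvol x R hR).2]
    apply measure_mono
    rintro y ⟨h1, h2, h3⟩
    rw [Metric.mem_closedBall, dist_eq_norm, norm_sub_rev]; exact h3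
  have h4 : (1:ℝ) ≤ 4 ^ n := one_le_pow₀ (by norm_num)
  by_cases hτR : R / 8 < τ
  · refine hSle.trans (ENNReal.ofReal_le_ofReal ?_)
    have : 1 ≤ 16 * 4 ^ n * (τ / R) := by
      have h8 : 1 / 8 ≤ τ / R := by rw [le_div_iff₀ hR]; linarith
      nlinarith
    calc ω * R ^ n = ω * R ^ n * 1 := by ring
      _ ≤ ω * R ^ n * (16 * 4 ^ n * (τ / R)) := by gcongr
      _ = _ := by ring
  · push Not at hτR
    have hSfin : volume S ≠ ⊤ := ne_top_of_le_ne_top ENNReal.ofReal_ne_top hSle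
    set N := ⌊R / (8 * τ)⌋₊ with hN
    set l := 1 - τ with hl
    have hl0 : 1 / 2 ≤ l := by linarith
    have hl1 : l < 1 := by linarith
    have hlp : 0 < l := by linarith
    have hq : 1 ≤ R / (8 * τ) := by rw [le_div_iff₀ (by positivity)]; linarith
    have hN1 : 1 ≤ N := Nat.one_le_floor_iff _ |>.2 hq
    have hNle : (N:ℝ) ≤ R / (8 * τ) := Nat.floor_le (by positivity)
    have hNge : R / (16 * τ) ≤ N := by
      have h1 : R / (8 * τ) < N + 1 := Nat.lt_floor_add_one _
      have h2 : (1:ℝ) ≤ N := by exact_mod_cast hN1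
      have h3 : R / (16 * τ) = R / (8 * τ) / 2 := by field_simp; norm_num
      linarith
    have hpow : ∀ j < N, 1 - R / 8 ≤ l ^ j := by
      intro j hj
      have hb := one_add_mul_le_pow (a := -τ) (by linarith) j
      have h1 : (j:ℝ) ≤ R / (8 * τ) := le_trans (by exact_mod_cast hj.le) hNle
      have h2 : (j:ℝ) * τ ≤ R / 8 := by
        calc (j:ℝ) * τ ≤ R / (8 * τ) * τ := by gcongr
          _ = R / 8 := by field_simp
      have h3 : 1 + -τ = l := by rw [hl]; ring
      rw [h3] at hb; linarith
    have hdisj : ((Finset.range N : Finset ℕ) : Set ℕ).PairwiseDisjoint (fun j => l ^ j • S) := by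
      have main : ∀ i j : ℕ, i < j → Disjoint (l ^ i • S) (l ^ j • S) := by
        intro i j hij
        rw [Set.disjoint_left]
        rintro z ⟨y, hy, rfl⟩ ⟨w, hw, hwz⟩
        have hn1 : ‖l ^ j • w‖ = ‖l ^ i • y‖ := congrArg norm hwz
        rw [norm_smul, norm_smul, norm_of_nonneg (by positivity), norm_of_nonneg (by positivity)] at hn1
        have hj : l ^ j ≤ l ^ i * l := by
          rw [← pow_succ]
          exact pow_le_pow_of_le_one hlp.le hl1.le hij
        have hy1 : l ≤ ‖y‖ := by have := hy.2.1; linarith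
        have hw1 : ‖w‖ < 1 := hw.1
        have hlj : 0 < l ^ j := by positivity
        have hli : 0 < l ^ i := by positivity
        have e1 : l ^ i * l ≤ l ^ i * ‖y‖ := by gcongr
        nlinarith
      intro i _ j _ hij
      rcases lt_or_gt_of_ne hij with h | h
      · exact main i j h
      · exact (main j i h).symm
    have hsub : (⋃ j ∈ Finset.range N, l ^ j • S) ⊆ Metric.closedBall x (2 * R) := by
      intro z hz
      simp only [mem_iUnion, Finset.mem_range] at hz
      obtain ⟨j, hj, y, hy, rfl⟩ := hz
      have hp := hpow j hj
      have hp1 : l ^ j ≤ 1 := pow_le_one₀ hlp.le hl1.le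
      rw [Metric.mem_closedBall, dist_eq_norm]
      have e1 : l ^ j • y - x = -((1 - l ^ j) • y) + (y - x) := by
        rw [sub_smul, one_smul]; abel
      change ‖l ^ j • y - x‖ ≤ _
      rw [e1]
      refine (norm_add_le _ _).trans ?_
      rw [norm_neg, norm_smul, norm_of_nonneg (by linarith), norm_sub_rev y x]
      have := hy.1
      have := hy.2.2
      have : (1 - l ^ j) * ‖y‖ ≤ (1 - l ^ j) * 1 := by gcongr
      linarith
    have hvolj : ∀ j ∈ Finset.range N, ENNReal.ofReal ((1/2) ^ n) * volume S ≤ volume (l ^ j • S) := by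
      intro j hj
      rw [Measure.addHaar_smul, finrank_euclideanSpace_fin]
      gcongr
      have h1 : 1 / 2 ≤ l ^ j := by
        have := hpow j (Finset.mem_range.1 hj); linarith
      rw [abs_of_nonneg (by positivity)]
      gcongr
    have hsum : (N:ENNReal) * (ENNReal.ofReal ((1/2) ^ n) * volume S) ≤ ENNReal.ofReal (ω * (2 * R) ^ n) := by
      rw [← (hvol x (2 * R) (by positivity)).2]
      calc (N:ENNReal) * (ENNReal.ofReal ((1/2) ^ n) * volume S)
          = ∑ j ∈ Finset.range N, ENNReal.ofReal ((1/2) ^ n) * volume S := by simp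
        _ ≤ ∑ j ∈ Finset.range N, volume (l ^ j • S) := Finset.sum_le_sum hvolj
        _ = volume (⋃ j ∈ Finset.range N, l ^ j • S) := by
            rw [measure_biUnion_finset hdisj]
            intro j _
            exact hSm.const_smul₀ _
        _ ≤ _ := measure_mono hsub
    rw [← ENNReal.ofReal_toReal hSfin] at hsum ⊢
    set v := (volume S).toReal with hv
    have hv0 : 0 ≤ v := ENNReal.toReal_nonneg
    rw [← ENNReal.ofReal_natCast, ← ENNReal.ofReal_mul (by positivity), ← ENNReal.ofReal_mul (by positivity),
      ENNReal.ofReal_le_ofReal_iff (by positivity)] at hsum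
    apply ENNReal.ofReal_le_ofReal
    have h5 : R / (16 * τ) * ((1/2) ^ n * v) ≤ ω * (2 * R) ^ n :=
      le_trans (by gcongr) hsum
    have h6 : v = (16 * τ / R * 2 ^ n) * (R / (16 * τ) * ((1/2) ^ n * v)) := by
      rw [div_pow]; field_simp; simp
    rw [h6]
    calc _ ≤ (16 * τ / R * 2 ^ n) * (ω * (2 * R) ^ n) := by gcongr
      _ = _ := by
        rw [mul_pow, show (4:ℝ) = 2 * 2 by norm_num, mul_pow]; ring

theorem layer_bound (n : ℕ) (hn : 2 ≤ n) :
    ∃ C : ℝ, 0 < C ∧ ∀ x : EuclideanSpace ℝ (Fin n), ‖x‖ < 1 → ∀ R τ : ℝ, 0 < R → 0 < τ →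
      volume {y : EuclideanSpace ℝ (Fin n) | ‖y‖ < 1 ∧ 1 - ‖y‖ ≤ τ ∧ ‖x - y‖ ≤ R} ≤
        ENNReal.ofReal (C * (R ^ n * (τ / R))) := by
  obtain ⟨C, hC, h⟩ := layer_small n
  refine ⟨C, hC, ?_⟩
  intro x hx R τ hR hτ
  by_cases h4 : R ≤ 4
  · exact h x R τ hR h4 hτ
  · push Not at h4
    refine le_trans (measure_mono ?_) ((h x 4 τ (by norm_num) le_rfl hτ).trans ?_)
    · rintro y ⟨h1, h2, h3⟩
      refine ⟨h1, h2, ?_⟩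
      have := norm_sub_le x y
      linarith
    · apply ENNReal.ofReal_le_ofReal
      obtain ⟨m, rfl⟩ : ∃ m, n = m + 1 := ⟨n - 1, by omega⟩
      have e1 : (4:ℝ) ^ (m + 1) * (τ / 4) = 4 ^ m * τ := by rw [pow_succ]; ring
      have e2 : R ^ (m + 1) * (τ / R) = R ^ m * τ := by rw [pow_succ]; field_simp
      rw [e1, e2]
      gcongr

theorem wt_bound (n : ℕ) (hn : 2 ≤ n) (γ : ℝ) (hγ : -1 < γ) :
    ∃ C : ℝ, 0 < C ∧ ∀ x : EuclideanSpace ℝ (Fin n), ‖x‖ < 1 → ∀ R : ℝ, 0 < R → 1 - ‖x‖ ≤ 2 * R →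
      ∫⁻ y in {y : EuclideanSpace ℝ (Fin n) | ‖y‖ < 1 ∧ ‖x - y‖ ≤ R},
        ENNReal.ofReal ((1 - ‖y‖) ^ γ) ≤ ENNReal.ofReal (C * (R ^ n * R ^ γ)) := by
  obtain ⟨C, hC, hlay⟩ := layer_bound n hn
  have hg1 : 0 < γ + 1 := by linarith
  have hq1 : ((1:ℝ)/2) ^ (γ + 1) < 1 := rpow_lt_one (by norm_num) (by norm_num) hg1
  have hq0 : 0 < ((1:ℝ)/2) ^ (γ + 1) := by positivity
  have h1q : 0 < 1 - ((1:ℝ)/2) ^ (γ + 1) := by linarith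
  set c : ℝ := 1 + (1/2) ^ γ with hc
  have hc0 : 0 < c := by positivity
  refine ⟨c * C * 3 ^ (γ + 1) / (1 - (1/2) ^ (γ + 1)), by positivity, ?_⟩
  intro x hx R hR hdR
  have key := lgeo (fun y => ENNReal.ofReal ((1 - ‖y‖) ^ γ))
    {y : EuclideanSpace ℝ (Fin n) | ‖y‖ < 1 ∧ ‖x - y‖ ≤ R}
    (fun k => {y | (3 * R * (1/2) ^ (k+1) < 1 - ‖y‖) ∧
      (‖y‖ < 1 ∧ 1 - ‖y‖ ≤ 3 * R * (1/2) ^ k ∧ ‖x - y‖ ≤ R)})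
    ?_ (c * C * (R ^ n / R) * (3 * R) ^ (γ + 1)) ((1/2) ^ (γ + 1)) (by positivity) hq0.le hq1 ?_
  · refine key.trans (le_of_eq ?_)
    congr 1
    rw [mul_rpow (by norm_num) hR.le, rpow_add hR γ 1, rpow_one]
    field_simp
  · rintro y ⟨h1, h2⟩
    have ht0 : 0 < 1 - ‖y‖ := by linarith
    have ht : 1 - ‖y‖ ≤ 3 * R := by
      have := norm_tri y x
      rw [norm_sub_rev] at this; linarith
    have h3R : 0 < 3 * R := by positivity
    obtain ⟨k, hk1, hk2⟩ := exists_nat_pow_near_of_lt_one (x := (1 - ‖y‖) / (3 * R)) (y := (1/2:ℝ))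
        (by positivity) (by rw [div_le_one h3R]; exact ht) (by norm_num) (by norm_num)
    rw [lt_div_iff₀ h3R] at hk1
    rw [div_le_iff₀ h3R] at hk2
    exact mem_iUnion.2 ⟨k, by linarith, h1, by linarith, h2⟩
  · intro k
    set T := 3 * R * (1/2) ^ k with hT
    have hT0 : 0 < T := by positivity
    have h := lconst_le (fun y => ENNReal.ofReal ((1 - ‖y‖) ^ γ))
      {y | (3 * R * (1/2) ^ (k+1) < 1 - ‖y‖) ∧ (‖y‖ < 1 ∧ 1 - ‖y‖ ≤ T ∧ ‖x - y‖ ≤ R)}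
      (T ^ γ * c) (C * (R ^ n * (T / R))) (by positivity) ?_ ?_
    · refine h.trans (le_of_eq ?_)
      congr 1
      have : (3 * R) ^ (γ + 1) * ((1/2) ^ (γ + 1)) ^ k = T ^ γ * T := by
        rw [← rpow_natCast, ← rpow_mul (by norm_num : (0:ℝ) ≤ 1/2), mul_comm (γ+1) (k:ℝ),
          rpow_mul (by norm_num : (0:ℝ) ≤ 1/2), ← mul_rpow (by positivity) (by positivity), rpow_natCast,
          ← hT, rpow_add hT0, rpow_one]
      rw [mul_assoc _ ((3 * R) ^ (γ + 1)), this]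
      ring
    · rintro y ⟨h1, h2, h3, h4⟩
      apply ENNReal.ofReal_le_ofReal
      have h1' : T * (1 / 2) ≤ 1 - ‖y‖ := by rw [hT]; rw [pow_succ] at h1; linarith
      have ht0 : 0 < 1 - ‖y‖ := by linarith
      have hTg : 0 < T ^ γ := by positivity
      have hhg : 0 < ((1:ℝ)/2) ^ γ := by positivity
      rcases le_total 0 γ with h0 | h0
      · have := rpow_le_rpow ht0.le h3 h0
        rw [hc]; nlinarith
      · have := rpow_le_rpow_of_nonpos (by positivity) h1' h0
        rw [mul_rpow hT0.le (by norm_num)] at this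
        rw [hc]; nlinarith
    · refine (measure_mono ?_).trans (hlay x hx R T hR hT0)
      rintro y ⟨h1, h2⟩
      exact h2

theorem ann_bound (n : ℕ) (hn : 2 ≤ n) (s β : ℝ) (hs : 0 < s) (hβ' : β < 1 + s) :
    ∃ C : ℝ, 0 < C ∧ ∀ x : EuclideanSpace ℝ (Fin n), ‖x‖ < 1 → ∀ R : ℝ, 0 < R →
      ∫⁻ y in {y : EuclideanSpace ℝ (Fin n) | ‖y‖ < 1 ∧ (1 - ‖x‖) / 2 ≤ ‖x - y‖ ∧ R / 2 ≤ ‖x - y‖ ∧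
          ‖x - y‖ ≤ R},
        ENNReal.ofReal (gK n s β x y) ≤ ENNReal.ofReal (C * ((1 - ‖x‖) ^ s * R ^ (s - β))) := by
  obtain ⟨C, hC, hwt⟩ := wt_bound n hn (s - β) (by linarith)
  refine ⟨C * 2 ^ n, by positivity, ?_⟩
  intro x hx R hR
  set d := 1 - ‖x‖ with hd
  have hd0 : 0 < d := by linarith
  by_cases hdR : d ≤ 2 * R
  · have hA : 0 ≤ d ^ s / (R / 2) ^ n := by positivity
    calc _ ≤ ∫⁻ y in {y : EuclideanSpace ℝ (Fin n) | ‖y‖ < 1 ∧ d / 2 ≤ ‖x - y‖ ∧ R / 2 ≤ ‖x - y‖ ∧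
          ‖x - y‖ ≤ R}, ENNReal.ofReal (d ^ s / (R / 2) ^ n) * ENNReal.ofReal ((1 - ‖y‖) ^ (s - β)) := by
          apply setLIntegral_mono (by fun_prop)
          rintro y ⟨h1, h2, h3, h4⟩
          rw [← ENNReal.ofReal_mul hA]
          apply ENNReal.ofReal_le_ofReal
          unfold gK
          have ht0 : 0 < 1 - ‖y‖ := by linarith
          have hr0 : 0 < ‖x - y‖ := by linarith [half_pos hR]
          rw [← hd]
          calc _ ≤ (d * (1 - ‖y‖)) ^ s / (R / 2) ^ n * (1 - ‖y‖) ^ (-β) := by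
                gcongr
                exact min_le_right _ _
            _ = _ := by
                rw [mul_rpow hd0.le ht0.le, sub_eq_add_neg s β, rpow_add ht0]; ring
      _ = ENNReal.ofReal (d ^ s / (R / 2) ^ n) * ∫⁻ y in {y : EuclideanSpace ℝ (Fin n) | ‖y‖ < 1 ∧
          d / 2 ≤ ‖x - y‖ ∧ R / 2 ≤ ‖x - y‖ ∧
          ‖x - y‖ ≤ R}, ENNReal.ofReal ((1 - ‖y‖) ^ (s - β)) :=
          lintegral_const_mul' _ _ ENNReal.ofReal_ne_top
      _ ≤ ENNReal.ofReal (d ^ s / (R / 2) ^ n) * ENNReal.ofReal (C * (R ^ n * R ^ (s - β))) := by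
          gcongr
          refine (lintegral_mono_set ?_).trans (hwt x hx R hR hdR)
          rintro y ⟨h1, h2, h3, h4⟩
          exact ⟨h1, h4⟩
      _ = _ := by
          rw [← ENNReal.ofReal_mul hA]
          congr 1
          rw [div_pow]
          field_simp
  · have : {y : EuclideanSpace ℝ (Fin n) | ‖y‖ < 1 ∧ d / 2 ≤ ‖x - y‖ ∧ R / 2 ≤ ‖x - y‖ ∧
          ‖x - y‖ ≤ R} = ∅ := by
      ext y
      simp only [mem_ofPred_eq, mem_empty_iff_false, iff_false]
      rintro ⟨h1, h2, h3, h4⟩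
      linarith
    rw [this]
    simp

theorem far_neg (n : ℕ) (hn : 2 ≤ n) (s β : ℝ) (hs : 0 < s) (hβ' : β < 1 + s) (hsβ : s < β) :
    ∃ C : ℝ, 0 < C ∧ ∀ x : EuclideanSpace ℝ (Fin n), ‖x‖ < 1 →
      ∫⁻ y in {y : EuclideanSpace ℝ (Fin n) | ‖y‖ < 1 ∧ (1 - ‖x‖) / 2 ≤ ‖x - y‖},
        ENNReal.ofReal (gK n s β x y) ≤ ENNReal.ofReal (C * (1 - ‖x‖) ^ (2 * s - β)) := by
  obtain ⟨C, hC, hann⟩ := ann_bound n hn s β hs hβ'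
  have hq1 : (2:ℝ) ^ (s - β) < 1 := rpow_lt_one_of_one_lt_of_neg (by norm_num) (by linarith)
  have hq0 : 0 < (2:ℝ) ^ (s - β) := by positivity
  have h1q : 0 < 1 - (2:ℝ) ^ (s - β) := by linarith
  refine ⟨C / (1 - 2 ^ (s - β)), by positivity, ?_⟩
  intro x hx
  have hann' := hann x hx
  set d := 1 - ‖x‖ with hd
  have hd0 : 0 < d := by linarith
  have key := lgeo (fun y => ENNReal.ofReal (gK n s β x y))
    {y : EuclideanSpace ℝ (Fin n) | ‖y‖ < 1 ∧ d / 2 ≤ ‖x - y‖}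
    (fun k => {y : EuclideanSpace ℝ (Fin n) | ‖y‖ < 1 ∧ d / 2 ≤ ‖x - y‖ ∧ d * 2 ^ k / 2 ≤ ‖x - y‖ ∧
          ‖x - y‖ ≤ d * 2 ^ k})
    ?_ (C * (d ^ s * d ^ (s - β))) (2 ^ (s - β)) (by positivity) hq0.le hq1 ?_
  · refine key.trans (le_of_eq ?_)
    congr 1
    rw [← rpow_add hd0, show s + (s - β) = 2 * s - β by ring]
    ring
  · rintro y ⟨h1, h2⟩
    have hd2 : 0 < d / 2 := by positivity
    obtain ⟨k, hk1, hk2⟩ := exists_nat_pow_near (x := ‖x - y‖ / (d / 2)) (y := (2:ℝ))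
      (by rw [one_le_div hd2]; exact h2) (by norm_num)
    rw [le_div_iff₀ hd2] at hk1
    rw [div_lt_iff₀ hd2, pow_succ] at hk2
    exact mem_iUnion.2 ⟨k, h1, h2, by linarith, by linarith⟩
  · intro k
    refine (hann' (d * 2 ^ k) (by positivity)).trans (le_of_eq ?_)
    congr 1
    have : (d * 2 ^ k) ^ (s - β) = d ^ (s - β) * (2 ^ (s - β)) ^ k := by
      rw [mul_rpow hd0.le (by positivity), ← rpow_natCast, ← rpow_natCast, ← rpow_mul (by norm_num),
        ← rpow_mul (by norm_num), mul_comm (k:ℝ)]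
    rw [this]; ring

theorem far_pos (n : ℕ) (hn : 2 ≤ n) (s β : ℝ) (hs : 0 < s) (hβ' : β < 1 + s) (hsβ : β < s) :
    ∃ C : ℝ, 0 < C ∧ ∀ x : EuclideanSpace ℝ (Fin n), ‖x‖ < 1 →
      ∫⁻ y in {y : EuclideanSpace ℝ (Fin n) | ‖y‖ < 1 ∧ (1 - ‖x‖) / 2 ≤ ‖x - y‖},
        ENNReal.ofReal (gK n s β x y) ≤ ENNReal.ofReal (C * (1 - ‖x‖) ^ s) := by
  obtain ⟨C, hC, hann⟩ := ann_bound n hn s β hs hβ'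
  have hq1 : ((1:ℝ)/2) ^ (s - β) < 1 := rpow_lt_one (by norm_num) (by norm_num) (by linarith)
  have hq0 : 0 < ((1:ℝ)/2) ^ (s - β) := by positivity
  have h1q : 0 < 1 - ((1:ℝ)/2) ^ (s - β) := by linarith
  refine ⟨C * 2 ^ (s - β) / (1 - (1/2) ^ (s - β)), by positivity, ?_⟩
  intro x hx
  have hann' := hann x hx
  set d := 1 - ‖x‖ with hd
  have hd0 : 0 < d := by linarith
  have key := lgeo (fun y => ENNReal.ofReal (gK n s β x y))
    {y : EuclideanSpace ℝ (Fin n) | ‖y‖ < 1 ∧ d / 2 ≤ ‖x - y‖}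
    (fun k => {y : EuclideanSpace ℝ (Fin n) | ‖y‖ < 1 ∧ d / 2 ≤ ‖x - y‖ ∧ 2 * (1/2) ^ k / 2 ≤ ‖x - y‖ ∧
          ‖x - y‖ ≤ 2 * (1/2) ^ k})
    ?_ (C * (d ^ s * 2 ^ (s - β))) ((1/2) ^ (s - β)) (by positivity) hq0.le hq1 ?_
  · refine key.trans (le_of_eq ?_)
    congr 1
    ring
  · rintro y ⟨h1, h2⟩
    have hd2 : 0 < d / 2 := by positivity
    have hr0 : 0 < ‖x - y‖ := by linarith
    have hr2 : ‖x - y‖ ≤ 2 := by have := norm_sub_le x y; linarith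
    obtain ⟨k, hk1, hk2⟩ := exists_nat_pow_near_of_lt_one (x := ‖x - y‖ / 2) (y := (1/2:ℝ))
      (by positivity) (by linarith) (by norm_num) (by norm_num)
    rw [pow_succ] at hk1
    exact mem_iUnion.2 ⟨k, h1, h2, by linarith, by linarith⟩
  · intro k
    refine (hann' (2 * (1/2) ^ k) (by positivity)).trans (le_of_eq ?_)
    congr 1
    have : (2 * (1/2:ℝ) ^ k) ^ (s - β) = 2 ^ (s - β) * ((1/2) ^ (s - β)) ^ k := by
      rw [mul_rpow (by norm_num) (by positivity), ← rpow_natCast, ← rpow_natCast, ← rpow_mul (by norm_num),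
        ← rpow_mul (by norm_num), mul_comm (k:ℝ)]
    rw [this]; ring

theorem log_ge_one (d : ℝ) (h0 : 0 < d) (h : d < 1/16) : 1 ≤ Real.log (1 / d) := by
  rw [Real.le_log_iff_exp_le (by positivity)]
  have h1 : (16:ℝ) ≤ 1 / d := by rw [le_div_iff₀ h0]; linarith
  have := Real.exp_one_lt_d9
  linarith

theorem far_zero (n : ℕ) (hn : 2 ≤ n) (s : ℝ) (hs : 0 < s) :
    ∃ C : ℝ, 0 < C ∧ ∀ x : EuclideanSpace ℝ (Fin n), ‖x‖ < 1 → 1 - ‖x‖ < 1/16 →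
      ∫⁻ y in {y : EuclideanSpace ℝ (Fin n) | ‖y‖ < 1 ∧ (1 - ‖x‖) / 2 ≤ ‖x - y‖},
        ENNReal.ofReal (gK n s s x y) ≤
          ENNReal.ofReal (C * ((1 - ‖x‖) ^ s * Real.log (1 / (1 - ‖x‖)))) := by
  obtain ⟨C, hC, hann⟩ := ann_bound n hn s s hs (by linarith)
  refine ⟨5 * C, by positivity, ?_⟩
  intro x hx hdsmall
  have hann' := hann x hx
  set d := 1 - ‖x‖ with hd
  have hd0 : 0 < d := by linarith
  have hlog := log_ge_one d hd0 hdsmall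
  have h4d : 1 ≤ 4 / d := by rw [le_div_iff₀ hd0]; linarith
  obtain ⟨N, hN1, hN2⟩ := exists_nat_pow_near h4d (by norm_num : (1:ℝ) < 2)
  have hNlog : (N:ℝ) + 1 ≤ 5 * Real.log (1 / d) := by
    have h1 := Real.log_le_log (by positivity) hN1
    rw [Real.log_pow] at h1
    have h2 : 4 / d ≤ (1 / d) ^ 2 := by
      rw [div_pow, div_le_div_iff₀ hd0 (by positivity)]; nlinarith
    have h3 := Real.log_le_log (by positivity) h2
    rw [Real.log_pow] at h3
    push_cast at h3
    have := Real.log_two_gt_d9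
    have hN0 : (0:ℝ) ≤ N := by positivity
    nlinarith
  set A : ℕ → Set (EuclideanSpace ℝ (Fin n)) := fun k =>
    {y : EuclideanSpace ℝ (Fin n) | ‖y‖ < 1 ∧ d / 2 ≤ ‖x - y‖ ∧ d * 2 ^ k / 2 ≤ ‖x - y‖ ∧
          ‖x - y‖ ≤ d * 2 ^ k} with hA
  have hsub : {y : EuclideanSpace ℝ (Fin n) | ‖y‖ < 1 ∧ d / 2 ≤ ‖x - y‖} ⊆ ⋃ k : Fin (N + 1), A k := by
    rintro y ⟨h1, h2⟩
    have hd2 : 0 < d / 2 := by positivity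
    obtain ⟨k, hk1, hk2⟩ := exists_nat_pow_near (x := ‖x - y‖ / (d / 2)) (y := (2:ℝ))
      (by rw [one_le_div hd2]; exact h2) (by norm_num)
    have hkN : k < N + 1 := by
      have hr2 : ‖x - y‖ ≤ 2 := by have := norm_sub_le x y; linarith
      have : ‖x - y‖ / (d / 2) ≤ 4 / d := by
        rw [div_le_div_iff₀ hd2 hd0]; nlinarith
      have h3 : (2:ℝ) ^ k < 2 ^ (N + 1) := by linarith
      exact (pow_lt_pow_iff_right₀ (by norm_num : (1:ℝ) < 2)).1 h3
    rw [le_div_iff₀ hd2] at hk1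
    rw [div_lt_iff₀ hd2, pow_succ] at hk2
    exact mem_iUnion.2 ⟨⟨k, hkN⟩, h1, h2, by simp only; linarith, by simp only; linarith⟩
  calc _ ≤ ∫⁻ y in ⋃ k : Fin (N + 1), A k, ENNReal.ofReal (gK n s s x y) := lintegral_mono_set hsub
    _ ≤ ∑' k : Fin (N + 1), ∫⁻ y in A k, ENNReal.ofReal (gK n s s x y) := lintegral_iUnion_le _ _
    _ ≤ ∑' k : Fin (N + 1), ENNReal.ofReal (C * d ^ s) := by
        apply ENNReal.tsum_le_tsum
        intro k
        refine (hann' (d * 2 ^ (k:ℕ)) (by positivity)).trans (le_of_eq ?_)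
        rw [sub_self, rpow_zero, mul_one]
    _ = ENNReal.ofReal ((N + 1) * (C * d ^ s)) := by
        rw [tsum_fintype, Finset.sum_const, Finset.card_univ, Fintype.card_fin, nsmul_eq_mul,
          ENNReal.ofReal_mul (by positivity : (0:ℝ) ≤ (N:ℝ) + 1)]
        congr 1
        rw [← ENNReal.ofReal_natCast]; push_cast; rfl
    _ ≤ _ := by
        apply ENNReal.ofReal_le_ofReal
        calc _ ≤ 5 * Real.log (1 / d) * (C * d ^ s) := by gcongr
          _ = _ := by ring

theorem low_near (n : ℕ) (hn : 2 ≤ n) (s β : ℝ) (hs : 0 < s) (hs1 : s < 1) (hβ : 0 < β) :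
    ∃ c : ℝ, 0 < c ∧ ∀ x : EuclideanSpace ℝ (Fin n), ‖x‖ < 1 →
      ENNReal.ofReal (c * (1 - ‖x‖) ^ (2 * s - β)) ≤
        ∫⁻ y in Metric.ball 0 1, ENNReal.ofReal (gK n s β x y) := by
  obtain ⟨ω, hω, hvol⟩ := volball n
  refine ⟨ω * ((1/2) ^ (2 * s) * 2 ^ (-β)), by positivity, ?_⟩
  intro x hx
  set d := 1 - ‖x‖ with hd
  have hd0 : 0 < d := by linarith
  have hd2 : 0 < d / 2 := by positivity
  have hsub : Metric.ball x (d / 2) \ {x} ⊆ Metric.ball 0 1 := by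
    rintro y ⟨hy, -⟩
    rw [mem_ball_iff_norm'] at hy
    rw [mem_ball_zero_iff]
    have := norm_tri x y
    linarith
  have hfr : 0 < Module.finrank ℝ (EuclideanSpace ℝ (Fin n)) := by
    rw [finrank_euclideanSpace_fin]; omega
  haveI : Nontrivial (EuclideanSpace ℝ (Fin n)) := Module.nontrivial_of_finrank_pos hfr
  have hn' : (2:ℝ) ≤ n := by exact_mod_cast hn
  have key := lconst_ge (fun y => ENNReal.ofReal (gK n s β x y)) (Metric.ball x (d / 2) \ {x})
    (measurableSet_ball.diff (measurableSet_singleton x))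
    ((d / 2) ^ (2 * s - n) * (2 * d) ^ (-β)) (ω * (d / 2) ^ n) (by positivity) ?_ ?_
  · refine le_trans (le_of_eq ?_) (key.trans (lintegral_mono_set hsub))
    congr 1
    have e1 : (d / 2) ^ (2 * s - n) * (d / 2) ^ n = (1/2) ^ (2 * s) * d ^ (2 * s) := by
      rw [← rpow_natCast (d / 2) n, ← rpow_add hd2, ← mul_rpow (by norm_num) hd0.le]
      congr 1 <;> ring
    have e2 : (2 * d) ^ (-β) = 2 ^ (-β) * d ^ (-β) := mul_rpow (by norm_num) hd0.le
    calc _ = ω * ((1/2) ^ (2 * s) * d ^ (2 * s)) * (2 ^ (-β) * d ^ (-β)) := by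
          rw [sub_eq_add_neg, rpow_add hd0]; ring
      _ = _ := by rw [← e1, ← e2]; ring
  · rintro y ⟨hy, hyx⟩
    rw [mem_ball_iff_norm'] at hy
    have hr0 : 0 < ‖x - y‖ := norm_pos_iff.2 (sub_ne_zero.2 (fun h => hyx h.symm))
    have h1 := norm_tri x y
    have h2 := norm_tri y x
    rw [norm_sub_rev y] at h2
    have ht : d / 2 ≤ 1 - ‖y‖ := by linarith
    have ht0 : 0 < 1 - ‖y‖ := by linarith
    have ht2 : 1 - ‖y‖ ≤ 2 * d := by linarith
    apply ENNReal.ofReal_le_ofReal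
    unfold gK
    rw [← hd, min_eq_left (by nlinarith)]
    have e : (‖x - y‖ ^ 2) ^ s / ‖x - y‖ ^ n = ‖x - y‖ ^ (2 * s - n) := by
      rw [rpow_sub hr0, rpow_natCast, rpow_mul hr0.le]
      norm_num
    rw [e]
    have i1 : (d / 2) ^ (2 * s - n) ≤ ‖x - y‖ ^ (2 * s - n) :=
      rpow_le_rpow_of_nonpos hr0 hy.le (by linarith)
    have i2 : (2 * d) ^ (-β) ≤ (1 - ‖y‖) ^ (-β) :=
      rpow_le_rpow_of_nonpos ht0 ht2 (by linarith)
    gcongr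
  · rw [measure_sdiff_null (measure_singleton x), (hvol x (d / 2) hd2).1]

theorem low_pos (n : ℕ) (hn : 2 ≤ n) (s β : ℝ) (hs : 0 < s) (hβ : 0 < β) :
    ∃ c : ℝ, 0 < c ∧ ∀ x : EuclideanSpace ℝ (Fin n), ‖x‖ < 1 → 1 - ‖x‖ < 1/16 →
      ENNReal.ofReal (c * (1 - ‖x‖) ^ s) ≤
        ∫⁻ y in Metric.ball 0 1, ENNReal.ofReal (gK n s β x y) := by
  obtain ⟨ω, hω, hvol⟩ := volball n
  refine ⟨(1/2) ^ s / 2 ^ n * (ω * (1/4) ^ n), by positivity, ?_⟩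
  intro x hx hds
  set d := 1 - ‖x‖ with hd
  have hd0 : 0 < d := by linarith
  have key := lconst_ge (fun y => ENNReal.ofReal (gK n s β x y)) (Metric.ball 0 (1/4))
    measurableSet_ball ((d * (1/2)) ^ s / 2 ^ n) (ω * (1/4) ^ n) (by positivity) ?_
    (hvol 0 (1/4) (by norm_num)).1.ge
  · refine le_trans (le_of_eq ?_) (key.trans (lintegral_mono_set (Metric.ball_subset_ball (by norm_num))))
    congr 1
    rw [mul_rpow hd0.le (by norm_num)]; ring
  · intro y hy
    rw [mem_ball_zero_iff] at hy
    apply ENNReal.ofReal_le_ofReal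
    unfold gK
    rw [← hd]
    have h1 : 1/2 ≤ ‖x - y‖ := by
      have := norm_sub_norm_le x y; linarith
    have h2 : ‖x - y‖ ≤ 2 := by
      have := norm_sub_le x y; linarith
    have hy0 := norm_nonneg y
    have ht0 : 0 < 1 - ‖y‖ := by linarith
    have hm : d * (1/2) ≤ min (‖x - y‖ ^ 2) (d * (1 - ‖y‖)) := by
      apply le_min
      · nlinarith
      · gcongr; linarith
    have hb : 1 ≤ (1 - ‖y‖) ^ (-β) :=
      one_le_rpow_of_pos_of_le_one_of_nonpos ht0 (by linarith) (by linarith)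
    calc (d * (1/2)) ^ s / 2 ^ n = (d * (1/2)) ^ s / 2 ^ n * 1 := by ring
      _ ≤ _ := by gcongr

theorem low_log (n : ℕ) (hn : 2 ≤ n) (s : ℝ) (hs : 0 < s) :
    ∃ c : ℝ, 0 < c ∧ ∀ x : EuclideanSpace ℝ (Fin n), ‖x‖ < 1 → 1 - ‖x‖ < 1/16 →
      ENNReal.ofReal (c * ((1 - ‖x‖) ^ s * Real.log (1 / (1 - ‖x‖)))) ≤
        ∫⁻ y in Metric.ball 0 1, ENNReal.ofReal (gK n s s x y) := by
  obtain ⟨ω, hω, hvol⟩ := volball n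
  refine ⟨(1/2) ^ s * ω * (1/4) ^ n / 2, by positivity, ?_⟩
  intro x hx hds
  set d := 1 - ‖x‖ with hd
  have hd0 : 0 < d := by linarith
  have hx0 : 0 < ‖x‖ := by linarith
  have h1d : (1:ℝ) ≤ 1 / d := by rw [le_div_iff₀ hd0]; linarith
  obtain ⟨N, hN1, hN2⟩ := exists_nat_pow_near h1d (by norm_num : (1:ℝ) < 2)
  have hlogN : Real.log (1 / d) ≤ 2 * N := by
    have hN0 : 1 ≤ N := by
      by_contra hcon
      have : N = 0 := by omega
      subst this
      rw [div_lt_iff₀ hd0] at hN2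
      norm_num at hN2; linarith
    have hN0' : (1:ℝ) ≤ N := by exact_mod_cast hN0
    have h1 := Real.log_le_log (by positivity) hN2.le
    rw [Real.log_pow] at h1
    push_cast at h1
    have := Real.log_two_lt_d9
    nlinarith
  set z : ℕ → EuclideanSpace ℝ (Fin n) := fun k => x - (3/2 * (d * 2 ^ k) / ‖x‖) • x with hz
  set A : ℕ → Set (EuclideanSpace ℝ (Fin n)) := fun k => Metric.ball (z k) (d * 2 ^ k / 2) with hA
  have hρ : ∀ k < N, d * 2 ^ k ≤ 1/2 := by
    intro k hk
    have h1 : (2:ℝ) ^ (k + 1) ≤ 2 ^ N := pow_le_pow_right₀ (by norm_num) hk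
    have h2 : (2:ℝ) ^ (k + 1) ≤ 1 / d := h1.trans hN1
    rw [le_div_iff₀ hd0, pow_succ] at h2
    linarith
  have hzx : ∀ k, ‖x - z k‖ = 3/2 * (d * 2 ^ k) := by
    intro k
    simp only [hz, sub_sub_cancel]
    rw [norm_smul, norm_of_nonneg (by positivity)]
    field_simp
  have hmem : ∀ k, ∀ y ∈ A k, d * 2 ^ k < ‖x - y‖ ∧ ‖x - y‖ < 2 * (d * 2 ^ k) := by
    intro k y hy
    rw [mem_ball_iff_norm'] at hy
    have h1 := hzx k
    have h2 : ‖x - y‖ ≤ ‖x - z k‖ + ‖z k - y‖ := norm_sub_le_norm_sub_add_norm_sub _ _ _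
    have h3 : ‖x - z k‖ ≤ ‖x - y‖ + ‖y - z k‖ := norm_sub_le_norm_sub_add_norm_sub _ _ _
    rw [norm_sub_rev y] at h3
    constructor <;> linarith
  have hin : ∀ k < N, ∀ y ∈ A k, ‖y‖ < 1 := by
    intro k hk y hy
    rw [mem_ball_iff_norm'] at hy
    have h1 := hρ k hk
    have hzk : ‖z k‖ = ‖x‖ - 3/2 * (d * 2 ^ k) := by
      have e : z k = (1 - 3/2 * (d * 2 ^ k) / ‖x‖) • x := by
        simp only [hz]; rw [sub_smul, one_smul]
      rw [e, norm_smul, norm_of_nonneg]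
      · field_simp
      · rw [sub_nonneg, div_le_one hx0]; linarith
    have h2 := norm_tri (z k) y
    have h3 : 0 < d * 2 ^ k := by positivity
    linarith
  have hdisj : ((Finset.range N : Finset ℕ) : Set ℕ).PairwiseDisjoint A := by
    have main : ∀ i j : ℕ, i < j → Disjoint (A i) (A j) := by
      intro i j hij
      rw [Set.disjoint_left]
      intro y hi hj
      have h1 := (hmem i y hi).2
      have h2 := (hmem j y hj).1
      have h3 : (2:ℝ) ^ (i + 1) ≤ 2 ^ j := pow_le_pow_right₀ (by norm_num) hij
      rw [pow_succ] at h3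
      nlinarith
    intro i _ j _ hij
    rcases lt_or_gt_of_ne hij with h | h
    · exact main i j h
    · exact (main j i h).symm
  have heach : ∀ k ∈ Finset.range N, ENNReal.ofReal ((1/2) ^ s * ω * (1/4) ^ n * d ^ s) ≤
      ∫⁻ y in A k, ENNReal.ofReal (gK n s s x y) := by
    intro k hk
    rw [Finset.mem_range] at hk
    set ρ := d * 2 ^ k with hρdef
    have hρ0 : 0 < ρ := by positivity
    have key := lconst_ge (fun y => ENNReal.ofReal (gK n s s x y)) (A k)
      measurableSet_ball ((d * (1/2)) ^ s / (2 * ρ) ^ n) (ω * (ρ / 2) ^ n) (by positivity) ?_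
      (hvol (z k) (ρ / 2) (by positivity)).1.ge
    · refine le_trans (le_of_eq ?_) key
      congr 1
      rw [mul_rpow hd0.le (by norm_num), mul_pow, div_pow ρ, div_pow, one_pow, show (4:ℝ) = 2 * 2 by norm_num, mul_pow]
      field_simp
    · intro y hy
      apply ENNReal.ofReal_le_ofReal
      have hy1 := hin k hk y hy
      obtain ⟨h1, h2⟩ := hmem k y hy
      have hdρ : d ≤ ρ := by
        have : (1:ℝ) ≤ 2 ^ k := one_le_pow₀ (by norm_num)
        rw [hρdef]; nlinarith
      have hr0 : 0 < ‖x - y‖ := by linarith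
      have ht0 : 0 < 1 - ‖y‖ := by linarith
      have ht : 1 - ‖y‖ ≤ 2 * ‖x - y‖ := by
        have := norm_tri y x
        rw [norm_sub_rev] at this; linarith
      have hm : d * (1/2) * (1 - ‖y‖) ≤ min (‖x - y‖ ^ 2) (d * (1 - ‖y‖)) := by
        apply le_min
        · nlinarith
        · nlinarith
      unfold gK
      rw [← hd]
      calc (d * (1/2)) ^ s / (2 * ρ) ^ n = (d * (1/2) * (1 - ‖y‖)) ^ s / (2 * ρ) ^ n * (1 - ‖y‖) ^ (-s) := by
            rw [mul_rpow (by positivity) ht0.le, rpow_neg ht0.le]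
            field_simp
        _ ≤ _ := by gcongr
  calc _ ≤ ENNReal.ofReal (N * ((1/2) ^ s * ω * (1/4) ^ n * d ^ s)) := by
        apply ENNReal.ofReal_le_ofReal
        have h0 : 0 ≤ (1/2) ^ s * ω * (1/4) ^ n * d ^ s := by positivity
        calc _ = ((1/2) ^ s * ω * (1/4) ^ n * d ^ s) * (Real.log (1 / d) / 2) := by ring
          _ ≤ ((1/2) ^ s * ω * (1/4) ^ n * d ^ s) * N := by gcongr; linarith
          _ = _ := by ring
    _ = ∑ k ∈ Finset.range N, ENNReal.ofReal ((1/2) ^ s * ω * (1/4) ^ n * d ^ s) := by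
        rw [Finset.sum_const, Finset.card_range, nsmul_eq_mul, ENNReal.ofReal_mul (by positivity),
          ENNReal.ofReal_natCast]
    _ ≤ ∑ k ∈ Finset.range N, ∫⁻ y in A k, ENNReal.ofReal (gK n s s x y) := Finset.sum_le_sum heach
    _ = ∫⁻ y in ⋃ k ∈ Finset.range N, A k, ENNReal.ofReal (gK n s s x y) :=
        (lintegral_biUnion_finset hdisj (fun _ _ => measurableSet_ball) _).symm
    _ ≤ _ := by
        apply lintegral_mono_set
        intro y hy
        simp only [mem_iUnion, Finset.mem_range] at hy
        obtain ⟨k, hk, hy⟩ := hy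
        rw [mem_ball_zero_iff]
        exact hin k hk y hy

theorem gp_eq (n : ℕ) (s β : ℝ) (x : EuclideanSpace ℝ (Fin n)) (hx : ‖x‖ < 1) :
    greenPotential n s β x = (∫⁻ y in Metric.ball 0 1, ENNReal.ofReal (gK n s β x y)).toReal := by
  unfold greenPotential
  rw [integral_eq_lintegral_of_nonneg_ae]
  · rfl
  · rw [Filter.EventuallyLE, ae_restrict_iff' measurableSet_ball]
    refine Filter.Eventually.of_forall ?_
    intro y hy
    rw [mem_ball_zero_iff] at hy
    have : 0 < 1 - ‖y‖ := by linarith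
    have : 0 < 1 - ‖x‖ := by linarith
    simp only [Pi.zero_apply]
    positivity
  · apply Measurable.aestronglyMeasurable
    fun_prop

theorem split_bound (n : ℕ) (s β : ℝ) (x : EuclideanSpace ℝ (Fin n)) (a b : ℝ)
    (ha : 0 ≤ a) (hb : 0 ≤ b)
    (h1 : ∫⁻ y in Metric.ball x ((1 - ‖x‖) / 2), ENNReal.ofReal (gK n s β x y) ≤ ENNReal.ofReal a)
    (h2 : ∫⁻ y in {y : EuclideanSpace ℝ (Fin n) | ‖y‖ < 1 ∧ (1 - ‖x‖) / 2 ≤ ‖x - y‖},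
        ENNReal.ofReal (gK n s β x y) ≤ ENNReal.ofReal b) :
    ∫⁻ y in Metric.ball 0 1, ENNReal.ofReal (gK n s β x y) ≤ ENNReal.ofReal (a + b) := by
  rw [ENNReal.ofReal_add ha hb]
  refine le_trans (lintegral_mono_set ?_) ((lintegral_union_le _ _ _).trans (add_le_add h1 h2))
  intro y hy
  rw [mem_ball_zero_iff] at hy
  rcases lt_or_ge ‖x - y‖ ((1 - ‖x‖) / 2) with h | h
  · left; rw [mem_ball_iff_norm']; exact h
  · right; exact ⟨hy, h⟩

theorem wrap (n : ℕ) (s β : ℝ) (g : ℝ → ℝ) (hg : ∀ d, 0 < d → d < 1/16 → 0 ≤ g d)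
    (hl : ∃ c : ℝ, 0 < c ∧ ∀ x : EuclideanSpace ℝ (Fin n), ‖x‖ < 1 → 1 - ‖x‖ < 1/16 →
      ENNReal.ofReal (c * g (1 - ‖x‖)) ≤ ∫⁻ y in Metric.ball 0 1, ENNReal.ofReal (gK n s β x y))
    (hu : ∃ C : ℝ, 0 < C ∧ ∀ x : EuclideanSpace ℝ (Fin n), ‖x‖ < 1 → 1 - ‖x‖ < 1/16 →
      ∫⁻ y in Metric.ball 0 1, ENNReal.ofReal (gK n s β x y) ≤ ENNReal.ofReal (C * g (1 - ‖x‖))) :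
    ∃ c C : ℝ, 0 < c ∧ c ≤ C ∧ ∃ ε₀ ∈ Set.Ioo (0 : ℝ) 1,
      ∀ x ∈ Metric.ball (0 : EuclideanSpace ℝ (Fin n)) 1, 1 - ‖x‖ < ε₀ →
        c * g (1 - ‖x‖) ≤ greenPotential n s β x ∧ greenPotential n s β x ≤ C * g (1 - ‖x‖) := by
  obtain ⟨c, hc, hl⟩ := hl
  obtain ⟨C, hC, hu⟩ := hu
  refine ⟨c, max c C, hc, le_max_left _ _, 1/16, ⟨by norm_num, by norm_num⟩, ?_⟩
  intro x hx hd
  rw [mem_ball_zero_iff] at hx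
  have hg' := hg (1 - ‖x‖) (by linarith) hd
  rw [gp_eq n s β x hx]
  have hu' := hu x hx hd
  constructor
  · rw [← ENNReal.ofReal_le_iff_le_toReal (ne_top_of_le_ne_top ENNReal.ofReal_ne_top hu')]
    exact hl x hx hd
  · refine (ENNReal.toReal_le_of_le_ofReal (by positivity) hu').trans ?_
    gcongr
    exact le_max_right _ _

theorem greenPotential_boundary_behaviour (n : ℕ) (hn : 2 ≤ n) (s β : ℝ)
    (hs : s ∈ Set.Ioo (0 : ℝ) 1) (hβ : 0 < β) (hβ' : β < 1 + s) :
    ∃ c C : ℝ, 0 < c ∧ c ≤ C ∧ ∃ ε₀ ∈ Set.Ioo (0 : ℝ) 1,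
      ∀ x ∈ Metric.ball (0 : EuclideanSpace ℝ (Fin n)) 1, 1 - ‖x‖ < ε₀ →
        ((β < s →
          c * (1 - ‖x‖) ^ s ≤ greenPotential n s β x ∧
          greenPotential n s β x ≤ C * (1 - ‖x‖) ^ s) ∧
        (β = s →
          c * ((1 - ‖x‖) ^ s * Real.log (1 / (1 - ‖x‖))) ≤ greenPotential n s β x ∧
          greenPotential n s β x ≤ C * ((1 - ‖x‖) ^ s * Real.log (1 / (1 - ‖x‖)))) ∧
        (s < β →
          c * (1 - ‖x‖) ^ (2 * s - β) ≤ greenPotential n s β x ∧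
          greenPotential n s β x ≤ C * (1 - ‖x‖) ^ (2 * s - β))) := by
  obtain ⟨hs0, hs1⟩ := hs
  obtain ⟨Cn, hCn, hnear⟩ := near_bound n hn s β hs0 hβ
  rcases lt_trichotomy β s with h | h | h
  · obtain ⟨Cf, hCf, hfar⟩ := far_pos n hn s β hs0 hβ' h
    obtain ⟨c, C, hc, hcC, ε, hε, H⟩ := wrap n s β (fun d => d ^ s) (fun d hd _ => by positivity)
      (low_pos n hn s β hs0 hβ) ⟨Cn + Cf, by positivity, by
        intro x hx hd
        have hd0 : 0 < 1 - ‖x‖ := by linarith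
        refine (split_bound n s β x _ _ (by positivity) (by positivity) (hnear x hd0) (hfar x hx)).trans ?_
        apply ENNReal.ofReal_le_ofReal
        rw [add_mul]
        have : (1 - ‖x‖) ^ (2 * s - β) ≤ (1 - ‖x‖) ^ s :=
          rpow_le_rpow_of_exponent_ge hd0 (by linarith) (by linarith)
        gcongr⟩
    exact ⟨c, C, hc, hcC, ε, hε, fun x hx hd =>
      ⟨fun _ => H x hx hd, fun h' => absurd h' (by linarith), fun h' => absurd h' (by linarith)⟩⟩
  · subst h
    obtain ⟨Cf, hCf, hfar⟩ := far_zero n hn β hs0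
    obtain ⟨c, C, hc, hcC, ε, hε, H⟩ := wrap n β β (fun d => d ^ β * Real.log (1 / d))
      (fun d hd hd' => by
        have := log_ge_one d hd hd'
        positivity)
      (low_log n hn β hs0) ⟨Cn + Cf, by positivity, by
        intro x hx hd
        have hd0 : 0 < 1 - ‖x‖ := by linarith
        have hlog := log_ge_one _ hd0 hd
        refine (split_bound n β β x _ _ (by positivity) (by positivity) (hnear x hd0) (hfar x hx hd)).trans ?_
        apply ENNReal.ofReal_le_ofReal
        rw [add_mul, show 2 * β - β = β by ring]
        gcongr
        have : 0 < (1 - ‖x‖) ^ β := by positivity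
        nlinarith⟩
    exact ⟨c, C, hc, hcC, ε, hε, fun x hx hd =>
      ⟨fun h' => absurd h' (lt_irrefl _), fun _ => H x hx hd, fun h' => absurd h' (lt_irrefl _)⟩⟩
  · obtain ⟨Cf, hCf, hfar⟩ := far_neg n hn s β hs0 hβ' h
    obtain ⟨c0, hc0, hlow⟩ := low_near n hn s β hs0 hs1 hβ
    obtain ⟨c, C, hc, hcC, ε, hε, H⟩ := wrap n s β (fun d => d ^ (2 * s - β)) (fun d hd _ => by positivity)
      ⟨c0, hc0, fun x hx _ => hlow x hx⟩ ⟨Cn + Cf, by positivity, by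
        intro x hx hd
        have hd0 : 0 < 1 - ‖x‖ := by linarith
        refine (split_bound n s β x _ _ (by positivity) (by positivity) (hnear x hd0) (hfar x hx)).trans ?_
        apply ENNReal.ofReal_le_ofReal
        rw [add_mul]⟩
    exact ⟨c, C, hc, hcC, ε, hε, fun x hx hd =>
      ⟨fun h' => absurd h' (by linarith), fun h' => absurd h' (by linarith), fun _ => H x hx hd⟩⟩
end

section
/- Let n ≥ 2. There exists a constant c = c(n) > 0 such that for every t ∈ (0,1), ∫_0^1 σ^{(n−3)/2}·((1−t)² + 2tσ)^{−n/2} dσ ≥ c/(1−t). -/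
open MeasureTheory Real Set

/-- For `n ≥ 2` there is `c = c(n) > 0` such that for every `t ∈ (0,1)`,
`∫_0^1 σ^{(n−3)/2}·((1−t)² + 2tσ)^{−n/2} dσ ≥ c/(1−t)`. -/
theorem integral_lower_bound_kernel (n : ℕ) (hn : 2 ≤ n) :
    ∃ c : ℝ, 0 < c ∧ ∀ t ∈ Set.Ioo (0 : ℝ) 1,
      c / (1 - t) ≤
        ∫ σ in Set.Ioo (0 : ℝ) 1,
          σ ^ (((n : ℝ) - 3) / 2) * ((1 - t) ^ 2 + 2 * t * σ) ^ (-(n : ℝ) / 2) := by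
  have hn' : (2 : ℝ) ≤ n := by exact_mod_cast hn
  refine ⟨(6 : ℝ) ^ (-(n : ℝ) / 2) / 2, by positivity, ?_⟩
  rintro t ⟨ht0, ht1⟩
  obtain ⟨s, hs⟩ : ∃ s, s = 1 - t := ⟨_, rfl⟩
  rw [← hs]
  have hs0 : 0 < s := by linarith
  have hs1 : s < 1 := by linarith
  have hss : s ^ 2 < 1 := by nlinarith
  have hs2 : 0 < s ^ 2 := by positivity
  have hint : IntegrableOn (fun σ : ℝ => σ ^ (((n : ℝ) - 3) / 2) *
      (s ^ 2 + 2 * t * σ) ^ (-(n : ℝ) / 2)) (Ioo 0 1) := by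
    have h1 : IntegrableOn (fun σ : ℝ => σ ^ (((n : ℝ) - 3) / 2)) (Ioo 0 1) :=
      (intervalIntegral.integrableOn_Ioo_rpow_iff one_pos).2 (by linarith)
    refine Integrable.mono' (h1.mul_const ((s ^ 2) ^ (-(n : ℝ) / 2))) ?_ ?_
    · exact (by fun_prop : Measurable _).aestronglyMeasurable
    · refine (ae_restrict_iff' measurableSet_Ioo).2 (Filter.Eventually.of_forall ?_)
      rintro σ ⟨h0, h1⟩
      have : 0 < t * σ := by positivity
      rw [Real.norm_of_nonneg (by positivity)]
      refine mul_le_mul_of_nonneg_left ?_ (by positivity)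
      exact Real.rpow_le_rpow_of_nonpos hs2 (by linarith) (by linarith)
  have hsub : Ioo (s ^ 2 / 2) (s ^ 2) ⊆ Ioo (0 : ℝ) 1 := Ioo_subset_Ioo (by positivity) hss.le
  have hconst : ((6 : ℝ) ^ (-(n : ℝ) / 2) / 2) / s =
      ∫ σ in Ioo (s ^ 2 / 2) (s ^ 2), (6 : ℝ) ^ (-(n : ℝ) / 2) * (s ^ 3)⁻¹ := by
    rw [setIntegral_const, Real.volume_real_Ioo_of_le (by linarith), smul_eq_mul]
    field_simp
    ring
  rw [hconst]
  refine le_trans ?_ (setIntegral_mono_set hint ?_ hsub.eventuallyLE)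
  · refine setIntegral_mono_on (integrableOn_const (by simp) enorm_ne_top) (hint.mono_set hsub) measurableSet_Ioo ?_
    rintro σ ⟨h0, h1⟩
    have hσ : 0 < σ := by linarith
    have e1 : σ ^ (((n : ℝ) - 3) / 2) = σ ^ ((n : ℝ) / 2) * σ ^ (-(3 : ℝ) / 2) := by
      rw [← Real.rpow_add hσ]; congr 1; ring
    have e2 : (s ^ 3)⁻¹ ≤ σ ^ (-(3 : ℝ) / 2) := by
      have : (s ^ 3)⁻¹ = (s ^ 2) ^ (-(3 : ℝ) / 2) := by
        rw [← Real.rpow_natCast s 2, ← Real.rpow_mul hs0.le, ← Real.rpow_natCast s 3,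
          ← Real.rpow_neg hs0.le]
        norm_num
      rw [this]
      exact Real.rpow_le_rpow_of_nonpos hσ h1.le (by norm_num)
    have e3 : (s ^ 2 / 2) ^ ((n : ℝ) / 2) ≤ σ ^ ((n : ℝ) / 2) :=
      Real.rpow_le_rpow (by positivity) h0.le (by positivity)
    have e4 : (3 * s ^ 2) ^ (-(n : ℝ) / 2) ≤ (s ^ 2 + 2 * t * σ) ^ (-(n : ℝ) / 2) :=
      Real.rpow_le_rpow_of_nonpos (by positivity) (by nlinarith) (by linarith)
    have e5 : (6 : ℝ) ^ (-(n : ℝ) / 2) =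
        (s ^ 2 / 2) ^ ((n : ℝ) / 2) * (3 * s ^ 2) ^ (-(n : ℝ) / 2) := by
      rw [neg_div, Real.rpow_neg (by positivity), Real.rpow_neg (by positivity),
        ← Real.inv_rpow (by positivity), ← Real.inv_rpow (by positivity),
        ← Real.mul_rpow (by positivity) (by positivity)]
      congr 1
      field_simp
      norm_num
    rw [e1, e5, mul_right_comm]
    gcongr
  · refine (ae_restrict_iff' measurableSet_Ioo).2 (Filter.Eventually.of_forall ?_)
    rintro σ ⟨h0, h1⟩
    show 0 ≤ σ ^ (((n : ℝ) - 3) / 2) * (s ^ 2 + 2 * t * σ) ^ (-(n : ℝ) / 2)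
    positivity
end
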